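/- Let q be a prime power with q > 2 and let S be an algebraic hypersurface of PG(6,q^2) of degree q+1 defined over GF(q^2), not containing any solid, with exactly q^11 + q^9 + q^7 + q^4 + q^2 + 1 rational points, and suppose there exists a solid Sigma_3 with |S ∩ Sigma_3| = q^4 + q^2 + 1. Then every hyperplane of PG(6,q^2) meets S in exactly q^9 + q^7 + q^4 + q^2 + 1 or exactly q^9 + q^7 + q^5 + q^4 + q^2 + 1 rational points; in particular, no hyperplane meets S in exactly q^9 + q^7 + q^5 + q^2 + 1 rational points. -/

import Mathlib

open MvPolynomial Module

/-- The set of points of the projective subspace of `PG(n-1, F)` determined by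
the linear subspace `W` of `F^n`. -/
def projPts {F : Type} [Field F] {n : ℕ} (W : Submodule F (Fin n → F)) :
    Set (Projectivization F (Fin n → F)) :=
  {P | P.submodule ≤ W}

/-- The set of `F`-rational points of the hypersurface of `PG(n-1, F)` defined by the
homogeneous polynomial `f`. -/
def hypersurfacePts {F : Type} [Field F] {n : ℕ} (f : MvPolynomial (Fin n) F) :
    Set (Projectivization F (Fin n → F)) :=
  {P | MvPolynomial.eval P.rep f = 0}

/-!
Let `f` be the equation, so that `f` has degree `q + 1` over the field with `q ^ 2` elements, and
count vectors in the cone of zeros of `f`.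

The point count forces every line to meet the hypersurface. Otherwise `f` restricts to each
translate of some two-dimensional subspace as a plane curve `φ` whose top form has no zero.
Following Stöhr and Voloch, `φ` is compared with `∑ i, (X i ^ (q ^ 2) - X i) * ∂φ/∂(X i)`: along a
tangent direction of `φ` both vanish to order two, so Bézout's theorem, applied after splitting off
the common factor, leaves fewer than `q ^ 3` zeros on each translate. Averaging over all translates
contradicts the number of zeros.

Consequently a solid with `q ^ 4 + q ^ 2 + 1` zeros meets the hypersurface in a plane `π`. A vector
coset of `π` contains at most `q ^ 5` zeros, and the point count forces equality for all cosets
outside the solid. Such a coset `c + π` has its zeros on `q` parallel planes, the level sets of a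
linear form on `π`, and the kernel of that form consists of the `y ∈ π` whose polar form vanishes
at `c`. Hence the polar forms of the points of `π` behave like those of a Hermitian form.

Let `H` be a hyperplane and `l = H ∩ π`. If `π ⊆ H`, counting zeros in cosets of `π` suffices.
Otherwise `l` has dimension two, its polar orthogonal `U` has dimension five, and the zeros in `U`
form a cone with vertex `l` over a set of `q ^ 3 + 1` points of a projective plane, which every
line meets in at least `1` and at most `q + 1` points. The first two moments of the intersection
numbers force each of them to be `1` or `q + 1`. Off `U` every coset of `l` contains `q ^ 3` zeros,
so these two cases give the two values for `H`.
-/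

section DoubleCounting

variable {V E : Type*} [Finite V] [Finite E] {σ : E → V → V} {A Z : Set V} {k : ℕ}

theorem sum_ncard_setOf_mem [Fintype A] (hσ : ∀ e, Set.BijOn (σ e) A A) :
    ∑ v : A, {e | σ e v ∈ Z}.ncard = Nat.card E * (A ∩ Z).ncard := by
  have := Fintype.ofFinite E
  have hfiber (e : E) : Nat.card {v : A // σ e v ∈ Z} = (A ∩ Z).ncard := by
    rw [← Nat.card_coe_set_eq]
    refine Nat.card_congr (((hσ e).equiv.subtypeEquiv (q := (· ∈ Subtype.val ⁻¹' Z))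
      fun v => Iff.rfl).trans (Equiv.subtypeSubtypeEquivSubtypeInter (· ∈ A) (· ∈ Z)))
  have hcomm : (Σ v : A, {e // σ e v ∈ Z}) ≃ Σ e, {v : A // σ e v ∈ Z} :=
    { toFun x := ⟨x.2, x.1, x.2.2⟩
      invFun x := ⟨x.2, x.1, x.2.2⟩
      left_inv _ := rfl
      right_inv _ := rfl }
  have hsum := Nat.card_congr hcomm
  simp only [Nat.card_sigma, hfiber, Finset.sum_const, Finset.card_univ, smul_eq_mul,
    ← Nat.card_eq_fintype_card] at hsum
  exact hsum

theorem card_mul_ncard_inter_le (hσ : ∀ e, Set.BijOn (σ e) A A)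
    (h : ∀ v ∈ A, {e | σ e v ∈ Z}.ncard ≤ k) : Nat.card E * (A ∩ Z).ncard ≤ A.ncard * k := by
  have := Fintype.ofFinite A
  rw [← sum_ncard_setOf_mem hσ]
  refine (Finset.sum_le_card_nsmul _ _ k fun (v : A) _ => h v v.2).trans ?_
  rw [Finset.card_univ, ← Nat.card_eq_fintype_card, Nat.card_coe_set_eq, smul_eq_mul]

theorem le_card_mul_ncard_inter (hσ : ∀ e, Set.BijOn (σ e) A A)
    (h : ∀ v ∈ A, k ≤ {e | σ e v ∈ Z}.ncard) : A.ncard * k ≤ Nat.card E * (A ∩ Z).ncard := by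
  have := Fintype.ofFinite A
  rw [← sum_ncard_setOf_mem hσ]
  refine le_trans ?_ (Finset.card_nsmul_le_sum _ _ k fun (v : A) _ => h v v.2)
  rw [Finset.card_univ, ← Nat.card_eq_fintype_card, Nat.card_coe_set_eq, smul_eq_mul]

theorem card_mul_ncard_inter_eq (hσ : ∀ e, Set.BijOn (σ e) A A)
    (h : ∀ v ∈ A, {e | σ e v ∈ Z}.ncard = k) : Nat.card E * (A ∩ Z).ncard = A.ncard * k :=
  (card_mul_ncard_inter_le hσ fun v hv => (h v hv).le).antisymm
    (le_card_mul_ncard_inter hσ fun v hv => (h v hv).ge)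

theorem ncard_setOf_mem_eq_of_le (hσ : ∀ e, Set.BijOn (σ e) A A)
    (h : ∀ v ∈ A, {e | σ e v ∈ Z}.ncard ≤ k) (heq : Nat.card E * (A ∩ Z).ncard = A.ncard * k) :
    ∀ v ∈ A, {e | σ e v ∈ Z}.ncard = k := by
  have := Fintype.ofFinite A
  have hsum : ∑ v : A, {e | σ e v ∈ Z}.ncard = ∑ _v : A, k := by
    simp [sum_ncard_setOf_mem hσ, heq, ← Nat.card_eq_fintype_card]
  intro v hv
  exact (Finset.sum_eq_sum_iff_of_le fun (v : A) _ => h v v.2).mp hsum ⟨v, hv⟩ (Finset.mem_univ _)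

theorem ncard_setOf_mem_eq_of_ge (hσ : ∀ e, Set.BijOn (σ e) A A)
    (h : ∀ v ∈ A, k ≤ {e | σ e v ∈ Z}.ncard) (heq : Nat.card E * (A ∩ Z).ncard = A.ncard * k) :
    ∀ v ∈ A, {e | σ e v ∈ Z}.ncard = k := by
  have := Fintype.ofFinite A
  have hsum : ∑ v : A, {e | σ e v ∈ Z}.ncard = ∑ _v : A, k := by
    simp [sum_ncard_setOf_mem hσ, heq, ← Nat.card_eq_fintype_card]
  intro v hv
  exact ((Finset.sum_eq_sum_iff_of_le fun (v : A) _ => h v v.2).mp hsum.symm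
    ⟨v, hv⟩ (Finset.mem_univ _)).symm

end DoubleCounting

theorem bijOn_add_right {V : Type*} [AddGroup V] {A : Set V} {w : V}
    (h : ∀ v, v + w ∈ A ↔ v ∈ A) : Set.BijOn (· + w) A A :=
  (Equiv.addRight w).bijOn h

section Star

variable {F D : Type*} [Field F] [AddCommGroup D] [Module F D]

theorem ncard_submodule (W : Submodule F D) [Module.Finite F W] :
    (W : Set D).ncard = Nat.card F ^ finrank F W := by
  rw [← Nat.card_coe_set_eq]
  exact Module.natCard_eq_pow_finrank (K := F) (V := W)

variable [Finite F]

theorem ncard_diff_singleton_le_of_star [Module.Finite F D] {Z : Set D} {O : D} {b : ℕ}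
    (h : ∀ y : D, y ≠ 0 → {t : F | t ≠ 0 ∧ O + t • y ∈ Z}.ncard ≤ b) :
    (Z \ {O}).ncard ≤ b * ∑ i ∈ Finset.range (finrank F D), Nat.card F ^ i := by
  have := Module.finite_of_finite F (M := D)
  have hQ : 2 ≤ Nat.card F := Finite.one_lt_card
  have hunits : Nat.card Fˣ = Nat.card F - 1 := Nat.card_units F
  have hA : ({0}ᶜ : Set D).ncard = Nat.card F ^ finrank F D - 1 := by
    rw [Set.ncard_compl, Set.ncard_singleton, Module.natCard_eq_pow_finrank (K := F) (V := D)]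
  have hbij (t : Fˣ) : Set.BijOn (t • · : D → D) {0}ᶜ {0}ᶜ :=
    (MulAction.toPerm t).bijOn fun y => by simp [smul_eq_zero_iff_eq]
  have havg := card_mul_ncard_inter_le (Z := {w | O + w ∈ Z}) (k := b) hbij fun y hy => by
    rw [← Set.ncard_image_of_injective _ Units.val_injective]
    refine (Set.ncard_le_ncard ?_ (Set.toFinite _)).trans (h y hy)
    rintro _ ⟨t, ht, rfl⟩
    exact ⟨t.ne_zero, ht⟩
  have himage : (O + ·) '' ({0}ᶜ ∩ {w | O + w ∈ Z}) = Z \ {O} := by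
    ext x
    constructor
    · rintro ⟨w, ⟨hw, hZ⟩, rfl⟩
      exact ⟨hZ, by simpa using hw⟩
    · rintro ⟨hx, hxO⟩
      exact ⟨x - O, ⟨by simpa [sub_eq_zero] using hxO, by simpa using hx⟩, by simp⟩
  rw [← Set.ncard_image_of_injective _ (add_right_injective O), himage, hunits, hA,
    ← geom_sum_mul_of_one_le (by omega), mul_comm _ (Nat.card F - 1), mul_assoc,
    mul_comm _ b] at havg
  exact Nat.le_of_mul_le_mul_left havg (by omega)

theorem ncard_le_of_star [Module.Finite F D] {Z : Set D} {O : D} {b : ℕ} (hO : O ∈ Z)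
    (h : ∀ y : D, y ≠ 0 → {t : F | O + t • y ∈ Z}.ncard ≤ b + 1) :
    Z.ncard ≤ b * ∑ i ∈ Finset.range (finrank F D), Nat.card F ^ i + 1 := by
  have := Module.finite_of_finite F (M := D)
  rw [← Set.ncard_sdiff_singleton_add_one hO]
  refine Nat.add_le_add_right (ncard_diff_singleton_le_of_star (F := F) fun y hy => ?_) 1
  have hline := h y hy
  rw [← Set.ncard_sdiff_singleton_add_one (a := (0 : F)) (by simpa using hO)] at hline
  refine (Set.ncard_le_ncard ?_ (Set.toFinite _)).trans (Nat.le_of_succ_le_succ hline)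
  exact fun t ht => ⟨ht.2, ht.1⟩

end Star

section RestrictLine

variable {σ R : Type*} [CommRing R]

/-- The restriction of a polynomial to the line `{u + t • m}`, as a polynomial in the parameter
`t`. -/
noncomputable def restrictLine (u m : σ → R) : MvPolynomial σ R →ₐ[R] Polynomial R :=
  aeval fun j => Polynomial.C (u j) + Polynomial.C (m j) * Polynomial.X

theorem restrictLine_X (u m : σ → R) (j : σ) :
    restrictLine u m (X j) = Polynomial.C (u j) + Polynomial.C (m j) * Polynomial.X :=
  aeval_X _ j

theorem eval_restrictLine (u m : σ → R) (f : MvPolynomial σ R) (t : R) :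
    (restrictLine u m f).eval t = eval (u + t • m) f := by
  have key : (Polynomial.aeval t).comp (restrictLine u m) = aeval (u + t • m) :=
    algHom_ext fun j => by simpa [restrictLine_X] using mul_comm _ _
  simpa [Polynomial.coe_aeval_eq_eval, coe_aeval_eq_eval] using DFunLike.congr_fun key f

theorem coeff_zero_restrictLine (u m : σ → R) (f : MvPolynomial σ R) :
    (restrictLine u m f).coeff 0 = eval u f := by
  rw [Polynomial.coeff_zero_eq_eval_zero, eval_restrictLine, zero_smul, add_zero]

theorem natDegree_restrictLine_le (u m : σ → R) (f : MvPolynomial σ R) :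
    (restrictLine u m f).natDegree ≤ f.totalDegree := by
  simpa using! aeval_natDegree_le (n := 1) f le_rfl _ fun j => by compute_degree

theorem derivative_restrictLine [Fintype σ] (u m : σ → R) (f : MvPolynomial σ R) :
    Polynomial.derivative (restrictLine u m f) =
      ∑ j, Polynomial.C (m j) * restrictLine u m (pderiv j f) := by
  classical
  induction f using MvPolynomial.induction_on with
  | C a => simp [restrictLine]
  | add p r hp hr => simp only [map_add, hp, hr, mul_add, Finset.sum_add_distrib]
  | mul_X p i hp =>
    have hsum : ∑ j, Polynomial.C (m j) * (restrictLine u m p *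
        restrictLine u m (pderiv j (X i))) = restrictLine u m p * Polynomial.C (m i) := by
      rw [Finset.sum_eq_single i (fun j _ hj => by simp [pderiv_X_of_ne hj.symm]) (by simp)]
      simp [mul_comm]
    simp only [map_mul, Polynomial.derivative_mul, hp, Derivation.leibniz, smul_eq_mul, map_add,
      mul_add, Finset.sum_add_distrib, hsum]
    simp only [restrictLine_X, Polynomial.derivative_add, Polynomial.derivative_C,
      Polynomial.derivative_C_mul_X, Finset.sum_mul]
    rw [zero_add, add_comm]
    congr 1
    exact Finset.sum_congr rfl fun j _ => by ring

theorem aeval_smul_of_isHomogeneous {S : Type*} [CommRing S] [Algebra R S]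
    {f : MvPolynomial σ R} {d : ℕ} (hf : f.IsHomogeneous d) (c : S) (v : σ → S) :
    aeval (c • v) f = c ^ d * aeval v f := by
  simp only [aeval_def, eval₂_eq, Finset.mul_sum]
  refine Finset.sum_congr rfl fun s hs => ?_
  simp only [Pi.smul_apply, smul_eq_mul, mul_pow, Finset.prod_mul_distrib,
    Finset.prod_pow_eq_pow_sum, hf.degree_eq_sum_deg_support hs]
  ring

theorem eval_smul_of_isHomogeneous {f : MvPolynomial σ R} {d : ℕ} (hf : f.IsHomogeneous d)
    (c : R) (v : σ → R) : eval (c • v) f = c ^ d * eval v f := by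
  simpa [coe_aeval_eq_eval] using aeval_smul_of_isHomogeneous hf c v

theorem eval_zero_of_isHomogeneous {f : MvPolynomial σ R} {d : ℕ} (hf : f.IsHomogeneous d)
    (hd : d ≠ 0) : eval (0 : σ → R) f = 0 := by
  simpa [hd] using eval_smul_of_isHomogeneous hf 0 0

theorem restrictLine_zero_right (u : σ → R) (f : MvPolynomial σ R) :
    restrictLine u 0 f = Polynomial.C (eval u f) := by
  simpa [restrictLine, coe_aeval_eq_eval] using! aeval_algebraMap_apply (Polynomial R) u f

theorem restrictLine_zero_left {f : MvPolynomial σ R} {d : ℕ} (hf : f.IsHomogeneous d)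
    (m : σ → R) : restrictLine 0 m f = Polynomial.X ^ d * Polynomial.C (eval m f) := by
  have hline : restrictLine 0 m f =
      aeval ((Polynomial.X : Polynomial R) • fun j => Polynomial.C (m j)) f := by
    simp only [restrictLine]
    congr 2
    ext1 j
    rw [Pi.zero_apply, map_zero, zero_add, Pi.smul_apply, smul_eq_mul, mul_comm]
  rw [hline, aeval_smul_of_isHomogeneous hf, ← restrictLine_zero_right]
  simp [restrictLine]

end RestrictLine

section LineCoeff

variable {R : Type*} [CommRing R] {n d : ℕ}

/-- The coefficient of `t ^ i` in `f (u + t • m)`, as a polynomial in `u`. It is computed by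
substituting `X (j + 1) + m j * X 0` for the `j`-th variable. -/
noncomputable def lineCoeff (m : Fin n → R) (f : MvPolynomial (Fin n) R) (i : ℕ) :
    MvPolynomial (Fin n) R :=
  (finSuccEquiv R n (aeval (fun j => X j.succ + C (m j) * X 0) f)).coeff i

theorem eval_lineCoeff (u m : Fin n → R) (f : MvPolynomial (Fin n) R) (i : ℕ) :
    eval u (lineCoeff m f i) = (restrictLine u m f).coeff i := by
  have key : restrictLine u m = ((Polynomial.mapAlgHom (aeval u)).comp
      (finSuccEquiv R n).toAlgHom).comp (aeval fun j => X j.succ + C (m j) * X 0) :=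
    algHom_ext fun j => by simp [restrictLine_X, finSuccEquiv_apply]
  rw [key, ← coe_aeval_eq_eval]
  exact (Polynomial.coeff_map _ _).symm

variable {f : MvPolynomial (Fin n) R}

private theorem isHomogeneous_aeval_X_succ_add (hf : f.IsHomogeneous d) (m : Fin n → R) :
    (aeval (fun j : Fin n => (X j.succ + C (m j) * X 0 : MvPolynomial (Fin (n + 1)) R))
      f).IsHomogeneous d := by
  simpa using hf.aeval (n := 1) (fun j => X j.succ + C (m j) * X 0) fun j =>
    (isHomogeneous_X _ _).add (isHomogeneous_C_mul_X _ _)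

theorem isHomogeneous_lineCoeff (hf : f.IsHomogeneous d) (m : Fin n → R) {i j : ℕ}
    (hij : i + j = d) : (lineCoeff m f i).IsHomogeneous j :=
  (isHomogeneous_aeval_X_succ_add hf m).finSuccEquiv_coeff_isHomogeneous i j hij

theorem natDegree_restrictLine_le_of_isHomogeneous (hf : f.IsHomogeneous d) (u m : Fin n → R) :
    (restrictLine u m f).natDegree ≤ d :=
  (natDegree_restrictLine_le u m f).trans hf.totalDegree_le

theorem coeff_restrictLine_self (hf : f.IsHomogeneous d) (u m : Fin n → R) :
    (restrictLine u m f).coeff d = eval m f := by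
  have hconst : lineCoeff m f d = C ((lineCoeff m f d).coeff 0) :=
    totalDegree_eq_zero_iff_eq_C.mp
      (Nat.le_zero.mp (isHomogeneous_lineCoeff hf m (j := 0) rfl).totalDegree_le)
  have hzero : eval u (lineCoeff m f d) = eval 0 (lineCoeff m f d) := by
    rw [hconst, eval_C, eval_C]
  rw [← eval_lineCoeff, hzero, eval_lineCoeff, restrictLine_zero_left hf,
    Polynomial.coeff_X_pow_mul', if_pos le_rfl, Nat.sub_self, Polynomial.coeff_C_zero]

theorem coeff_restrictLine_of_totalDegree_le (hf : f.totalDegree ≤ d) (u m : Fin n → R) :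
    (restrictLine u m f).coeff d = eval m (homogeneousComponent d f) := by
  conv_lhs => rw [← sum_homogeneousComponent f, map_sum, Polynomial.finsetSum_coeff]
  have hlow {i : ℕ} (hi : i < d) : (restrictLine u m (homogeneousComponent i f)).coeff d = 0 :=
    Polynomial.coeff_eq_zero_of_natDegree_lt ((natDegree_restrictLine_le_of_isHomogeneous
      (homogeneousComponent_isHomogeneous i f) u m).trans_lt hi)
  rw [← coeff_restrictLine_self (homogeneousComponent_isHomogeneous d f) u m]
  rcases hf.lt_or_eq with hlt | rfl
  · rw [homogeneousComponent_eq_zero _ _ hlt, map_zero, Polynomial.coeff_zero]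
    exact Finset.sum_eq_zero fun i hi => hlow (by simp at hi; omega)
  · rw [Finset.sum_range_succ, Finset.sum_eq_zero fun i hi => hlow (Finset.mem_range.mp hi),
      zero_add]

theorem eval_add_of_isHomogeneous_one (hf : f.IsHomogeneous 1) (u v : Fin n → R) :
    eval (u + v) f = eval u f + eval v f := by
  have hline := eval_restrictLine u v f 1
  rw [Polynomial.eval_eq_sum_range' (Nat.lt_succ_of_le
    (natDegree_restrictLine_le_of_isHomogeneous hf u v))] at hline
  simpa [Finset.sum_range_succ, coeff_zero_restrictLine, coeff_restrictLine_self hf] using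
    hline.symm

/-- The polar linear form of a homogeneous polynomial `f` of degree `d + 1` at `y`: the
coefficient of `t ^ d` in `f (v + t • y)`, as a function of `v`. -/
noncomputable def polarForm (hf : f.IsHomogeneous (d + 1)) (y : Fin n → R) :
    (Fin n → R) →ₗ[R] R where
  toFun v := (restrictLine v y f).coeff d
  map_add' u v := by
    simp only [← eval_lineCoeff,
      eval_add_of_isHomogeneous_one (isHomogeneous_lineCoeff hf y (i := d) rfl)]
  map_smul' c v := by
    simp only [← eval_lineCoeff,
      eval_smul_of_isHomogeneous (isHomogeneous_lineCoeff hf y (i := d) rfl)]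
    simp

theorem polarForm_apply (hf : f.IsHomogeneous (d + 1)) (y v : Fin n → R) :
    polarForm hf y v = (restrictLine v y f).coeff d :=
  rfl

end LineCoeff

section Roots

variable {F σ : Type*} [Field F] {f : MvPolynomial σ F} {u y : σ → F}

theorem ncard_zeros_line_le {k : ℕ} (hk : (restrictLine u y f).natDegree ≤ k)
    (h0 : restrictLine u y f ≠ 0) : {t : F | eval (u + t • y) f = 0}.ncard ≤ k := by
  classical
  have hroots : {t : F | eval (u + t • y) f = 0} = ↑(restrictLine u y f).roots.toFinset := by
    ext t
    simp [h0, eval_restrictLine]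
  rw [hroots, Set.ncard_coe_finset]
  exact (Multiset.toFinset_card_le _).trans ((Polynomial.card_roots' _).trans hk)

theorem restrictLine_eq_zero [Finite F] (hdeg : (restrictLine u y f).natDegree < Nat.card F)
    (h : ∀ t : F, eval (u + t • y) f = 0) : restrictLine u y f = 0 := by
  by_contra h0
  have hcard := ncard_zeros_line_le le_rfl h0
  simp only [h, Set.ofPred_true, Set.ncard_univ] at hcard
  omega

theorem restrictLine_ne_zero_of_eval_ne_zero (h : eval u f ≠ 0) : restrictLine u y f ≠ 0 :=
  fun h0 => h (by rw [← coeff_zero_restrictLine u y, h0, Polynomial.coeff_zero])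

end Roots

section Bezout

variable {F : Type*} [Field F]

theorem finrank_restrictTotalDegree_fin_two (m : ℕ) :
    finrank F (restrictTotalDegree (Fin 2) F m) * 2 = (m + 1) * (m + 2) := by
  have hsum (n : Fin 2 →₀ ℕ) : (n.sum fun _ e => e) = n 0 + n 1 := by
    rw [Finsupp.sum_fintype _ _ fun _ => rfl, Fin.sum_univ_two]
  have hbij : Set.BijOn (fun n : Fin 2 →₀ ℕ => (⟨n 0 + n 1, n 0, n 1⟩ : Σ _ : ℕ, ℕ × ℕ))
      {n | (n.sum fun _ e => e) ≤ m}
      ((Finset.range (m + 1)).sigma fun k => Finset.HasAntidiagonal.antidiagonal k) := by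
    refine ⟨fun n hn => ?_, fun a _ b _ hab => ?_, ?_⟩
    · simpa [hsum, Nat.lt_succ_iff] using hn
    · simp only [Sigma.mk.injEq, heq_eq_eq, Prod.mk.injEq] at hab
      exact Finsupp.ext (Fin.forall_fin_two.mpr hab.2)
    · rintro ⟨k, i, j⟩ hkij
      simp only [Finset.coe_sigma, Set.mem_sigma_iff, SetLike.mem_coe, Finset.mem_range,
        Finset.HasAntidiagonal.mem_antidiagonal] at hkij
      obtain ⟨hk, rfl⟩ := hkij
      refine ⟨Finsupp.equivFunOnFinite.symm ![i, j], ?_, by simp⟩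
      simpa [hsum] using Nat.lt_succ_iff.mp hk
  calc finrank F (restrictTotalDegree (Fin 2) F m) * 2
      = {n : Fin 2 →₀ ℕ | (n.sum fun _ e => e) ≤ m}.ncard * 2 :=
        congrArg (· * 2) (finrank_eq_nat_card_basis (basisRestrictSupport F _))
    _ = (∑ k ∈ Finset.range (m + 1), (k + 1)) * 2 := by
        rw [← hbij.injOn.ncard_image, hbij.image_eq, Set.ncard_coe_finset, Finset.card_sigma]
        simp only [Finset.Nat.card_antidiagonal]
    _ = (m + 1) * (m + 2) := by
        have hgauss := Finset.sum_range_id_mul_two (m + 2)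
        rw [Finset.sum_range_succ', add_zero] at hgauss
        rw [hgauss, mul_comm]
        rfl

theorem finrank_map_mulLeft {A : Type*} [CommRing A] [IsDomain A] [Algebra F A] {e : A}
    (he : e ≠ 0) (W : Submodule F A) :
    finrank F (W.map (LinearMap.mulLeft F e)) = finrank F W :=
  (Submodule.equivMapOfInjective _ (mul_right_injective₀ he) W).symm.finrank_eq

theorem exists_totalDegree_le_surjOn {σ Y : Type*} [AddCommGroup Y] [Module F Y]
    [FiniteDimensional F Y] {L : MvPolynomial σ F →ₗ[F] Y} (hL : Function.Surjective L) :
    ∃ m, Set.SurjOn L (restrictTotalDegree σ F m) Set.univ := by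
  let b := finBasis F Y
  choose g hg using fun i => hL (b i)
  refine ⟨Finset.univ.sup fun i => (g i).totalDegree, fun y _ => ⟨∑ i, b.repr y i • g i, ?_, ?_⟩⟩
  · refine (mem_restrictTotalDegree _ _ _).mpr
      ((totalDegree_finsetSum _ _).trans (Finset.sup_mono_fun fun i _ => totalDegree_smul_le _ _))
  · simp only [map_sum, map_smul, hg, b.sum_repr]

theorem finrank_add_finrank_le_of_surjOn {V Y : Type*} [AddCommGroup V] [Module F V]
    [AddCommGroup Y] [Module F Y] {L : V →ₗ[F] Y} {W U : Submodule F V} [FiniteDimensional F W]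
    (hL : Set.SurjOn L W Set.univ) (hUW : U ≤ W) (hU : U ≤ LinearMap.ker L) :
    finrank F Y + finrank F U ≤ finrank F W := by
  have hrange : LinearMap.range (L.domRestrict W) = ⊤ := by
    refine LinearMap.range_eq_top.mpr fun y => ?_
    obtain ⟨a, ha, rfl⟩ := hL (Set.mem_univ y)
    exact ⟨⟨a, ha⟩, rfl⟩
  have hker : finrank F (LinearMap.ker (L.domRestrict W)) =
      finrank F (W ⊓ LinearMap.ker L : Submodule F V) := by
    rw [← Submodule.map_comap_subtype, ← LinearMap.ker_domRestrict]
    exact (Submodule.equivMapOfInjective _ W.injective_subtype _).finrank_eq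
  have : FiniteDimensional F (W ⊓ LinearMap.ker L : Submodule F V) :=
    Submodule.finiteDimensional_inf_left _ _
  rw [← LinearMap.finrank_range_add_finrank_ker (L.domRestrict W), hrange, finrank_top, hker]
  exact Nat.add_le_add_left (Submodule.finrank_mono (le_inf hUW hU)) _

variable {σ : Type*} {e h : MvPolynomial σ F}

theorem map_mulLeft_restrictTotalDegree_le (e : MvPolynomial σ F) (m : ℕ) :
    (restrictTotalDegree σ F m).map (LinearMap.mulLeft F e) ≤
      restrictTotalDegree σ F (e.totalDegree + m) := by
  rintro _ ⟨a, ha, rfl⟩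
  exact (mem_restrictTotalDegree _ _ _).mpr ((totalDegree_mul e a).trans
    (Nat.add_le_add_left ((mem_restrictTotalDegree _ _ _).mp ha) _))

theorem map_mulLeft_inf_map_mulLeft_le (he : e ≠ 0) (hr : IsRelPrime e h)
    (W : Submodule F (MvPolynomial σ F)) (m : ℕ) :
    W.map (LinearMap.mulLeft F e) ⊓
        (restrictTotalDegree σ F (m + e.totalDegree)).map (LinearMap.mulLeft F h) ≤
      (restrictTotalDegree σ F m).map (LinearMap.mulLeft F (e * h)) := by
  rintro _ ⟨⟨a, -, rfl⟩, b, hb, hab⟩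
  simp only [LinearMap.mulLeft_apply] at hab
  obtain ⟨c, rfl⟩ := hr.dvd_of_dvd_mul_left ⟨a, hab⟩
  refine ⟨c, (mem_restrictTotalDegree _ _ _).mpr ?_, ?_⟩
  · have hdeg := (mem_restrictTotalDegree _ _ _).mp hb
    by_cases hc : c = 0
    · simp [hc]
    · rw [totalDegree_mul_of_isDomain he hc] at hdeg
      omega
  · simp only [LinearMap.mulLeft_apply, ← hab]
    ring

theorem finrank_le_totalDegree_mul_totalDegree {Y : Type*} [AddCommGroup Y] [Module F Y]
    [FiniteDimensional F Y] {e h : MvPolynomial (Fin 2) F} (he : e ≠ 0) (hh : h ≠ 0)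
    (hr : IsRelPrime e h) {L : MvPolynomial (Fin 2) F →ₗ[F] Y} (hL : Function.Surjective L)
    (hLe : ∀ a, L (e * a) = 0) (hLh : ∀ a, L (h * a) = 0) :
    finrank F Y ≤ e.totalDegree * h.totalDegree := by
  obtain ⟨m, hm⟩ := exists_totalDegree_le_surjOn hL
  set W := restrictTotalDegree (Fin 2) F
  set D := e.totalDegree
  set E := h.totalDegree
  have hmono {i j : ℕ} (hij : i ≤ j) : W i ≤ W j := fun p hp =>
    (mem_restrictTotalDegree _ _ _).mpr (((mem_restrictTotalDegree _ _ _).mp hp).trans hij)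
  set A := (W (m + E)).map (LinearMap.mulLeft F e)
  set B := (W (m + D)).map (LinearMap.mulLeft F h)
  have hsup : A ⊔ B ≤ W (m + D + E) :=
    sup_le ((map_mulLeft_restrictTotalDegree_le e _).trans (hmono (by omega)))
      ((map_mulLeft_restrictTotalDegree_le h _).trans (hmono (by omega)))
  have hker : A ⊔ B ≤ LinearMap.ker L :=
    sup_le (Submodule.map_le_iff_le_comap.mpr fun a _ => hLe a)
      (Submodule.map_le_iff_le_comap.mpr fun a _ => hLh a)
  have hinf : finrank F (A ⊓ B : Submodule F _) ≤ finrank F (W m) := by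
    rw [← finrank_map_mulLeft (mul_ne_zero he hh) (W m)]
    exact Submodule.finrank_mono (map_mulLeft_inf_map_mulLeft_le he hr _ m)
  have hY := finrank_add_finrank_le_of_surjOn
    (hm.mono (hmono (show m ≤ m + D + E by omega)) le_rfl) hsup hker
  have hAB := Submodule.finrank_sup_add_finrank_inf_eq A B
  rw [finrank_map_mulLeft he, finrank_map_mulLeft hh] at hAB
  have h1 := finrank_restrictTotalDegree_fin_two (F := F) (m + D + E)
  have h2 := finrank_restrictTotalDegree_fin_two (F := F) (m + E)
  have h3 := finrank_restrictTotalDegree_fin_two (F := F) (m + D)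
  have h4 := finrank_restrictTotalDegree_fin_two (F := F) m
  nlinarith

end Bezout

section RestrictFlat

variable {σ ι R : Type*} [CommRing R]

theorem totalDegree_aeval_le {g : σ → MvPolynomial ι R} (hg : ∀ j, (g j).totalDegree ≤ 1)
    (f : MvPolynomial σ R) : (aeval g f).totalDegree ≤ f.totalDegree := by
  rw [aeval_def, eval₂_eq]
  refine totalDegree_finsetSum_le fun s hs => ?_
  rw [algebraMap_eq]
  refine (totalDegree_mul _ _).trans ?_
  rw [totalDegree_C, zero_add]
  refine (totalDegree_finsetProd _ _).trans (le_trans ?_ (le_totalDegree hs))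
  refine Finset.sum_le_sum fun j _ => (totalDegree_pow _ _).trans ?_
  exact (Nat.mul_le_mul_left _ (hg j)).trans (mul_one _).le

variable [Fintype ι]

/-- The restriction of a polynomial to the flat `{w + ∑ i, P i • u i}`, as a polynomial in the
parameters `P i`. -/
noncomputable def restrictFlat (w : σ → R) (u : ι → σ → R) :
    MvPolynomial σ R →ₐ[R] MvPolynomial ι R :=
  aeval fun j => C (w j) + ∑ i, C (u i j) * X i

theorem eval_restrictFlat (w : σ → R) (u : ι → σ → R) (f : MvPolynomial σ R) (P : ι → R) :
    eval P (restrictFlat w u f) = eval (w + ∑ i, P i • u i) f := by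
  have key : (aeval P).comp (restrictFlat w u) = aeval (w + ∑ i, P i • u i) :=
    algHom_ext fun j => by simp [restrictFlat, mul_comm]
  simpa [coe_aeval_eq_eval] using DFunLike.congr_fun key f

theorem restrictLine_restrictFlat (w : σ → R) (u : ι → σ → R) (f : MvPolynomial σ R)
    (P δ : ι → R) :
    restrictLine P δ (restrictFlat w u f) =
      restrictLine (w + ∑ i, P i • u i) (∑ i, δ i • u i) f := by
  have key : (restrictLine P δ).comp (restrictFlat w u) =
      restrictLine (w + ∑ i, P i • u i) (∑ i, δ i • u i) :=
    algHom_ext fun j => by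
      simp only [restrictFlat, AlgHom.comp_apply, aeval_X, map_add, map_sum, map_mul,
        restrictLine_X, algHom_C, Polynomial.algebraMap_eq, Pi.add_apply, Finset.sum_apply,
        Pi.smul_apply, smul_eq_mul, mul_add, Finset.sum_add_distrib, Finset.sum_mul, add_assoc]
      congr 2 <;> exact Finset.sum_congr rfl fun i _ => by ring
  exact DFunLike.congr_fun key f

theorem totalDegree_restrictFlat_le (w : σ → R) (u : ι → σ → R) (f : MvPolynomial σ R) :
    (restrictFlat w u f).totalDegree ≤ f.totalDegree := by
  refine totalDegree_aeval_le (fun j => ?_) f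
  refine (totalDegree_add _ _).trans (max_le (by simp) (totalDegree_finsetSum_le fun i _ => ?_))
  exact (isHomogeneous_C_mul_X _ _).totalDegree_le

end RestrictFlat

section FrobDeriv

variable {F σ : Type*} [Field F]

theorem totalDegree_pderiv_le (i : σ) (φ : MvPolynomial σ F) :
    (pderiv i φ).totalDegree ≤ φ.totalDegree - 1 := by
  conv_lhs => rw [← sum_homogeneousComponent φ, map_sum]
  refine totalDegree_finsetSum_le fun k hk => ?_
  have hk' := Finset.mem_range.mp hk
  exact (homogeneousComponent_isHomogeneous k φ).pderiv.totalDegree_le.trans (by omega)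

variable [Fintype σ]

/-- The derivative of `φ` at a point `x` in the direction `x ^ Q - x` of its Frobenius image, where
`Q` is the order of `F`: the auxiliary polynomial of the Stöhr–Voloch bound. -/
noncomputable def frobDeriv (φ : MvPolynomial σ F) : MvPolynomial σ F :=
  ∑ i, (X i ^ Nat.card F - X i) * pderiv i φ

theorem restrictLine_frobDeriv [Finite F] (P δ : σ → F) (φ : MvPolynomial σ F) :
    restrictLine P δ (frobDeriv φ) =
      (Polynomial.X ^ Nat.card F - Polynomial.X) * Polynomial.derivative (restrictLine P δ φ) := by
  have := Fintype.ofFinite F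
  have hfrob (i : σ) : restrictLine P δ (X i ^ Nat.card F - X i) =
      Polynomial.C (δ i) * (Polynomial.X ^ Nat.card F - Polynomial.X) := by
    rw [map_sub, map_pow, restrictLine_X, Nat.card_eq_fintype_card, ← FiniteField.expand_card]
    simp only [map_add, map_mul, Polynomial.expand_C, Polynomial.expand_X]
    ring
  rw [frobDeriv, derivative_restrictLine, map_sum, Finset.mul_sum]
  refine Finset.sum_congr rfl fun i _ => ?_
  rw [map_mul, hfrob]
  ring

theorem totalDegree_frobDeriv_le [Finite F] (φ : MvPolynomial σ F) :
    (frobDeriv φ).totalDegree ≤ Nat.card F + (φ.totalDegree - 1) := by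
  refine totalDegree_finsetSum_le fun i _ => (totalDegree_mul _ _).trans
    (add_le_add ((totalDegree_sub _ _).trans (max_le ?_ ?_)) (totalDegree_pderiv_le i φ))
  · rw [totalDegree_X_pow]
  · rw [totalDegree_X]
    exact Nat.card_pos

end FrobDeriv

section FrobDerivDvd

variable {F : Type*} [Field F] [Finite F] {d : ℕ}

theorem coeff_of_mul_eq_mul_derivative {g k : Polynomial F} (hd : d ≠ 0)
    (hg : g.natDegree ≤ d) (hgd : g.coeff d ≠ 0) (hk : k.natDegree ≤ Nat.card F - 1)
    (h : g * k = (Polynomial.X ^ Nat.card F - Polynomial.X) * Polynomial.derivative g) :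
    k.coeff (Nat.card F - 1) = d := by
  have hQ : 1 < Nat.card F := Finite.one_lt_card
  obtain ⟨d, rfl⟩ := Nat.exists_eq_succ_of_ne_zero hd
  have hderiv : (Polynomial.derivative g).natDegree ≤ d :=
    (Polynomial.natDegree_derivative_le g).trans (by omega)
  have htop := congrArg (fun p => p.coeff (Nat.card F + d)) h
  rw [Polynomial.coeff_mul_add_eq_of_natDegree_le
      (FiniteField.X_pow_card_sub_X_natDegree_eq F hQ).le hderiv,
    show Nat.card F + d = d + 1 + (Nat.card F - 1) by omega,
    Polynomial.coeff_mul_add_eq_of_natDegree_le hg hk, Polynomial.coeff_derivative,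
    Polynomial.coeff_sub, Polynomial.coeff_X_pow_self, Polynomial.coeff_X_of_ne_one hQ.ne',
    sub_zero, one_mul] at htop
  exact_mod_cast mul_left_cancel₀ hgd htop

theorem eval_homogeneousComponent_of_mul_eq_frobDeriv {n : ℕ} {φ k : MvPolynomial (Fin n) F}
    (hd : d ≠ 0) (hφ : φ.totalDegree ≤ d) (hk : k.totalDegree ≤ Nat.card F - 1)
    (h : φ * k = frobDeriv φ)
    {δ : Fin n → F} (hδ : eval δ (homogeneousComponent d φ) ≠ 0) :
    eval δ (homogeneousComponent (Nat.card F - 1) k) = d := by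
  rw [← coeff_restrictLine_of_totalDegree_le hk 0]
  refine coeff_of_mul_eq_mul_derivative hd ((natDegree_restrictLine_le 0 δ φ).trans hφ) ?_
    ((natDegree_restrictLine_le 0 δ k).trans hk) ?_
  · rwa [coeff_restrictLine_of_totalDegree_le hφ]
  · rw [← map_mul, h, restrictLine_frobDeriv]

theorem exists_eval_ne_of_isHomogeneous {K : MvPolynomial (Fin 2) F}
    (hK : K.IsHomogeneous (Nat.card F - 1)) {a : F} (ha : a ≠ 0) : ∃ δ ≠ 0, eval δ K ≠ a := by
  have := Fintype.ofFinite F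
  have hQ : 1 < Nat.card F := Finite.one_lt_card
  by_contra! h
  have hconst : restrictLine ![0, 1] ![1, 0] K = Polynomial.C a := by
    refine Polynomial.eq_of_natDegree_lt_card_of_eval_eq _ _ Function.injective_id (fun t => ?_) ?_
    · rw [eval_restrictLine, Polynomial.eval_C]
      exact h _ fun h0 => by simpa using congrFun h0 1
    · rw [Polynomial.natDegree_C, ← Nat.card_eq_fintype_card]
      have := natDegree_restrictLine_le_of_isHomogeneous hK ![0, 1] ![1, 0]
      omega
  have htop := coeff_restrictLine_self hK ![0, 1] ![1, 0]
  rw [hconst, Polynomial.coeff_C_of_ne_zero (by omega),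
    h _ fun h0 => by simpa using congrFun h0 0] at htop
  exact ha htop.symm

theorem not_dvd_frobDeriv {φ : MvPolynomial (Fin 2) F} (hd : (d : F) ≠ 0) (hφ : φ.totalDegree ≤ d)
    (htop : ∀ δ ≠ 0, eval δ (homogeneousComponent d φ) ≠ 0) : ¬ φ ∣ frobDeriv φ := by
  rintro ⟨k, hk⟩
  have hd0 : d ≠ 0 := by rintro rfl; simp at hd
  obtain ⟨δ, hδ⟩ := exists_ne (0 : Fin 2 → F)
  have hkdeg : k.totalDegree ≤ Nat.card F - 1 := by
    have hφ0 : φ ≠ 0 := by rintro rfl; exact htop δ hδ (by simp)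
    have hdeg : d ≤ φ.totalDegree := by
      by_contra! hlt
      exact htop δ hδ (by rw [homogeneousComponent_eq_zero _ _ hlt, map_zero])
    rcases eq_or_ne k 0 with rfl | hk0
    · simp
    · have := totalDegree_frobDeriv_le φ
      rw [hk, totalDegree_mul_of_isDomain hφ0 hk0] at this
      omega
  obtain ⟨δ', hδ', hne⟩ := exists_eval_ne_of_isHomogeneous
    (homogeneousComponent_isHomogeneous (Nat.card F - 1) k) hd
  exact hne (eval_homogeneousComponent_of_mul_eq_frobDeriv hd0 hφ hkdeg hk.symm (htop δ' hδ'))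

end FrobDerivDvd

section TangentPoints

variable {F : Type*} [Field F]

theorem coeff_one_pow_card [Finite F] (p : Polynomial F) : (p ^ Nat.card F).coeff 1 = 0 := by
  have := Fintype.ofFinite F
  have hQ : Nat.card F ≠ 1 := Finite.one_lt_card.ne'
  rw [Nat.card_eq_fintype_card] at hQ ⊢
  rw [← FiniteField.expand_card, Polynomial.coeff_expand Fintype.card_pos, if_neg]
  rwa [Nat.dvd_one]

theorem exists_coeff_restrictLine_eq {σ : Type*} (P : σ → F) {δ : σ → F} (hδ : δ ≠ 0) (a b : F) :
    ∃ g : MvPolynomial σ F,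
      (restrictLine P δ g).coeff 0 = a ∧ (restrictLine P δ g).coeff 1 = b := by
  obtain ⟨j, hj : δ j ≠ 0⟩ := Function.ne_iff.mp hδ
  refine ⟨C a + C (b * (δ j)⁻¹) * (X j - C (P j)), ?_, ?_⟩
  · simp [coeff_zero_restrictLine]
  · simp [restrictLine_X, algHom_C, mul_assoc, hj]

theorem exists_forall_coeff_restrictLine_eq [Finite F] {σ : Type*} [Finite σ]
    (T : Finset (σ → F)) {τ : (σ → F) → σ → F} (hτ : ∀ P ∈ T, τ P ≠ 0) (a b : (σ → F) → F) :
    ∃ g : MvPolynomial σ F, ∀ P ∈ T,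
      (restrictLine P (τ P) g).coeff 0 = a P ∧ (restrictLine P (τ P) g).coeff 1 = b P := by
  classical
  have := Fintype.ofFinite F
  have := Fintype.ofFinite σ
  choose! g hg₀ hg₁ using fun P hP => exists_coeff_restrictLine_eq P (hτ P hP) (a P) (b P)
  have hind (P R : σ → F) :
      (restrictLine P (τ P) (indicator R ^ Nat.card F)).coeff 0 = if R = P then 1 else 0 := by
    rw [coeff_zero_restrictLine, map_pow]
    split_ifs with h
    · rw [h, eval_indicator_apply_eq_one, one_pow]
    · rw [eval_indicator_apply_eq_zero _ _ (Ne.symm h), zero_pow Nat.card_pos.ne']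
  refine ⟨∑ R ∈ T, indicator R ^ Nat.card F * g R, fun P hP => ⟨?_, ?_⟩⟩
  · simp [-map_pow, -Nat.card_eq_fintype_card, Polynomial.finsetSum_coeff,
      Polynomial.mul_coeff_zero, hind, hP, hg₀]
  · have hind₁ (R : σ → F) : (restrictLine P (τ P) (indicator R ^ Nat.card F)).coeff 1 = 0 := by
      rw [map_pow, coeff_one_pow_card]
    simp [-map_pow, -Nat.card_eq_fintype_card, Polynomial.finsetSum_coeff,
      Polynomial.mul_coeff_one, hind, hind₁, hP, hg₁]

theorem two_mul_ncard_le_of_sq_dvd [Finite F] {e h : MvPolynomial (Fin 2) F} (he : e ≠ 0)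
    (hh : h ≠ 0) (hr : IsRelPrime e h) {T : Set (Fin 2 → F)}
    (hT : ∀ P ∈ T, ∃ τ ≠ 0, Polynomial.X ^ 2 ∣ restrictLine P τ e ∧
      Polynomial.X ^ 2 ∣ restrictLine P τ h) :
    2 * T.ncard ≤ e.totalDegree * h.totalDegree := by
  choose! τ hτ hτe hτh using hT
  let jet (P : Fin 2 → F) (i : ℕ) : MvPolynomial (Fin 2) F →ₗ[F] F :=
    Polynomial.lcoeff F i ∘ₗ (restrictLine P (τ P)).toLinearMap
  let L : MvPolynomial (Fin 2) F →ₗ[F] (T → F × F) :=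
    LinearMap.pi fun P => (jet P 0).prod (jet P 1)
  have hL : Function.Surjective L := fun y => by
    classical
    obtain ⟨g, hg⟩ := exists_forall_coeff_restrictLine_eq T.toFinite.toFinset
      (by simpa using hτ) (fun P => if hP : P ∈ T then (y ⟨P, hP⟩).1 else 0)
      (fun P => if hP : P ∈ T then (y ⟨P, hP⟩).2 else 0)
    refine ⟨g, funext fun P => Prod.ext ?_ ?_⟩
    · exact (hg P (by simp)).1.trans (dif_pos P.2)
    · exact (hg P (by simp)).2.trans (dif_pos P.2)
  have hvanish {g : MvPolynomial (Fin 2) F}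
      (hg : ∀ P ∈ T, Polynomial.X ^ 2 ∣ restrictLine P (τ P) g) (a : MvPolynomial (Fin 2) F) :
      L (g * a) = 0 := by
    funext P
    have hdvd : Polynomial.X ^ 2 ∣ restrictLine P.1 (τ P) (g * a) := by
      rw [map_mul]
      exact (hg P P.2).mul_right _
    rw [Polynomial.X_pow_dvd_iff] at hdvd
    exact Prod.ext (hdvd 0 (by norm_num)) (hdvd 1 (by norm_num))
  have := Fintype.ofFinite T
  have hdim := finrank_le_totalDegree_mul_totalDegree he hh hr hL (hvanish hτe) (hvanish hτh)
  rwa [Module.finrank_pi_fintype, Finset.sum_const, Module.finrank_prod, Module.finrank_self,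
    Finset.card_univ, ← Nat.card_eq_fintype_card, Nat.card_coe_set_eq, smul_eq_mul,
    mul_comm] at hdim

theorem exists_sq_dvd_restrictLine {e : MvPolynomial (Fin 2) F} {P : Fin 2 → F}
    (he : eval P e = 0) : ∃ τ ≠ 0, Polynomial.X ^ 2 ∣ restrictLine P τ e := by
  have hjet (τ : Fin 2 → F) (hτ : τ 0 * eval P (pderiv 0 e) + τ 1 * eval P (pderiv 1 e) = 0) :
      Polynomial.X ^ 2 ∣ restrictLine P τ e := by
    rw [Polynomial.X_pow_dvd_iff]
    intro i hi
    have hderiv : (Polynomial.derivative (restrictLine P τ e)).coeff 0 = 0 := by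
      rw [derivative_restrictLine, Fin.sum_univ_two]
      simpa [coeff_zero_restrictLine] using hτ
    interval_cases i
    · rw [coeff_zero_restrictLine, he]
    · simpa [Polynomial.coeff_derivative] using hderiv
  by_cases h : eval P (pderiv 0 e) = 0 ∧ eval P (pderiv 1 e) = 0
  · exact ⟨1, one_ne_zero, hjet 1 (by simp [h])⟩
  · refine ⟨![eval P (pderiv 1 e), -eval P (pderiv 0 e)], fun h0 => h ⟨?_, ?_⟩, hjet _ ?_⟩
    · simpa using congrFun h0 1
    · simpa using congrFun h0 0
    · simp [mul_comm]

theorem sq_dvd_restrictLine_frobDeriv [Finite F] {σ : Type*} [Fintype σ] {φ : MvPolynomial σ F}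
    {P τ : σ → F} (h : Polynomial.X ^ 2 ∣ restrictLine P τ φ) :
    Polynomial.X ^ 2 ∣ restrictLine P τ (frobDeriv φ) := by
  obtain ⟨p, hp⟩ := h
  rw [restrictLine_frobDeriv, sq, hp]
  refine mul_dvd_mul ?_ ?_
  · exact (dvd_pow_self _ Nat.card_pos.ne').sub dvd_rfl
  · exact ⟨2 * p + Polynomial.X * Polynomial.derivative p, by simp; ring⟩

theorem two_mul_ncard_le_of_frobDeriv [Finite F] {φ c e h : MvPolynomial (Fin 2) F} (he : e ≠ 0)
    (hh : h ≠ 0) (hr : IsRelPrime e h) (hφ : c * e = φ) (hfrob : c * h = frobDeriv φ) :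
    2 * {P | eval P e = 0 ∧ eval P c ≠ 0}.ncard ≤ e.totalDegree * h.totalDegree := by
  refine two_mul_ncard_le_of_sq_dvd he hh hr fun P ⟨hPe, hPc⟩ => ?_
  obtain ⟨τ, hτ, hdvd⟩ := exists_sq_dvd_restrictLine hPe
  have hfrob_dvd : Polynomial.X ^ 2 ∣ restrictLine P τ c * restrictLine P τ h := by
    rw [← map_mul, hfrob]
    refine sq_dvd_restrictLine_frobDeriv ?_
    rw [← hφ, map_mul]
    exact hdvd.mul_left _
  refine ⟨τ, hτ, hdvd, Polynomial.prime_X.pow_dvd_of_dvd_mul_left 2 ?_ hfrob_dvd⟩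
  rwa [Polynomial.X_dvd_iff, coeff_zero_restrictLine]

end TangentPoints

section PlaneCurves

variable {F : Type*} [Field F]

theorem ncard_zeros_le_of_restrictLine_ne_zero [Finite F] {σ : Type*} [Fintype σ]
    {c : MvPolynomial σ F} (hc : ∀ P, ∀ δ ≠ 0, restrictLine P δ c ≠ 0) :
    {P | eval P c = 0}.ncard ≤
      (c.totalDegree - 1) * ∑ i ∈ Finset.range (Fintype.card σ), Nat.card F ^ i + 1 := by
  rcases Set.eq_empty_or_nonempty {P | eval P c = 0} with h0 | ⟨P, hP⟩
  · simp [h0]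
  · rw [← Module.finrank_fintype_fun_eq_card F]
    refine ncard_le_of_star hP fun δ hδ => ?_
    have hle := ncard_zeros_line_le (natDegree_restrictLine_le P δ c) (hc P δ hδ)
    exact hle.trans (by omega)

theorem eval_ne_zero_of_totalDegree_eq_zero {σ : Type*} {c : MvPolynomial σ F} (hc : c ≠ 0)
    (hdeg : c.totalDegree = 0) (P : σ → F) : eval P c ≠ 0 := by
  rw [totalDegree_eq_zero_iff_eq_C] at hdeg
  rw [hdeg, eval_C]
  intro h0
  exact hc (by rw [hdeg, h0, map_zero])

theorem totalDegree_ne_zero_of_not_dvd {σ : Type*} {c e h φ : MvPolynomial σ F} (he : e ≠ 0)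
    (hφ : c * e = φ) (hndvd : ¬ φ ∣ c * h) : e.totalDegree ≠ 0 := by
  intro h0
  rw [totalDegree_eq_zero_iff_eq_C] at h0
  have hunit : IsUnit e := by
    rw [h0]
    exact (IsUnit.mk0 _ fun hc => he (by rw [h0, hc, map_zero])).map C
  exact hndvd (hφ ▸ mul_dvd_mul_left c hunit.dvd)

theorem add_lt_pow_three_of_le_of_two_mul_le {q D M A B : ℕ} (hq : 3 ≤ q) (hDM : D + M = q + 1)
    (hD : D ≠ 0) (hA : A ≤ (M - 1) * (q ^ 2 + 1) + 1) (hA0 : M = 0 → A = 0)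
    (hB : 2 * B ≤ D * (q ^ 2 + D - 1)) : A + B < q ^ 3 := by
  rcases Nat.eq_zero_or_pos M with hM | hM
  · obtain rfl : D = q + 1 := by omega
    rw [hA0 hM, zero_add]
    rw [show q ^ 2 + (q + 1) - 1 = q ^ 2 + q by omega] at hB
    nlinarith
  · obtain ⟨m, rfl⟩ := Nat.exists_eq_add_of_le' hM
    obtain ⟨d, rfl⟩ := Nat.exists_eq_succ_of_ne_zero hD
    rw [Nat.add_sub_cancel] at hA
    rw [show q ^ 2 + d.succ - 1 = q ^ 2 + d by omega] at hB
    obtain rfl : q = d + m + 1 := by omega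
    nlinarith [Nat.zero_le (d * m), Nat.zero_le (d * d * m), Nat.zero_le (d * m * m),
      Nat.zero_le (m * m), Nat.zero_le (d * d)]

variable [Finite F] {q : ℕ}

theorem ncard_zeros_lt_of_homogeneousComponent_ne_zero (hF : Nat.card F = q ^ 2) (hq : 3 ≤ q)
    (hqF : (q : F) = 0) {φ : MvPolynomial (Fin 2) F} (hφ : φ.totalDegree ≤ q + 1)
    (htop : ∀ δ ≠ 0, eval δ (homogeneousComponent (q + 1) φ) ≠ 0) :
    {P | eval P φ = 0}.ncard < q ^ 3 := by
  have hndvd := not_dvd_frobDeriv (d := q + 1) (by simp [hqF]) hφ htop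
  have hdeg : φ.totalDegree = q + 1 := hφ.antisymm <| by
    by_contra! hlt
    exact htop 1 one_ne_zero (by rw [homogeneousComponent_eq_zero _ _ hlt, map_zero])
  have hφ0 : φ ≠ 0 := by rintro rfl; simp at hdeg
  obtain ⟨e, h, c, hrel, hce, hch⟩ :=
    UniqueFactorizationMonoid.exists_reduced_factors φ hφ0 (frobDeriv φ)
  have hc0 : c ≠ 0 := by rintro rfl; exact hφ0 (by rw [← hce, zero_mul])
  have he0 : e ≠ 0 := by rintro rfl; exact hφ0 (by rw [← hce, mul_zero])
  have hh0 : h ≠ 0 := by rintro rfl; exact hndvd (by rw [← hch, mul_zero]; exact dvd_zero φ)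
  have hdeg_ce : c.totalDegree + e.totalDegree = q + 1 := by
    rw [← totalDegree_mul_of_isDomain hc0 he0, hce, hdeg]
  have hdeg_ch : c.totalDegree + h.totalDegree ≤ q ^ 2 + q := by
    rw [← totalDegree_mul_of_isDomain hc0 hh0, hch, ← hF]
    exact (totalDegree_frobDeriv_le φ).trans (by omega)
  have hline (P δ : Fin 2 → F) (hδ : δ ≠ 0) : restrictLine P δ c ≠ 0 := by
    intro h0
    refine htop δ hδ ?_
    rw [← coeff_restrictLine_of_totalDegree_le hφ P, ← hce, map_mul, h0, zero_mul,
      Polynomial.coeff_zero]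
  have hA := ncard_zeros_le_of_restrictLine_ne_zero hline
  rw [Fintype.card_fin, Finset.sum_range_succ, Finset.sum_range_one, pow_zero, pow_one, hF,
    add_comm 1] at hA
  have hA0 (hM : c.totalDegree = 0) : {P | eval P c = 0}.ncard = 0 := by
    simp [eval_ne_zero_of_totalDegree_eq_zero hc0 hM]
  have hB := two_mul_ncard_le_of_frobDeriv he0 hh0 hrel hce hch
  have hcover : {P | eval P φ = 0} ⊆ {P | eval P c = 0} ∪ {P | eval P e = 0 ∧ eval P c ≠ 0} := by
    intro P hP
    rw [Set.mem_ofPred_eq, ← hce, map_mul, mul_eq_zero] at hP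
    exact (em (eval P c = 0)).imp id fun h => ⟨hP.resolve_left h, h⟩
  refine ((Set.ncard_le_ncard hcover (Set.toFinite _)).trans (Set.ncard_union_le _ _)).trans_lt ?_
  exact add_lt_pow_three_of_le_of_two_mul_le hq (by omega)
    (totalDegree_ne_zero_of_not_dvd he0 hce (hch ▸ hndvd)) hA hA0
    (hB.trans (Nat.mul_le_mul_left _ (by omega)))

theorem ncard_zeros_plane_lt (hF : Nat.card F = q ^ 2) (hq : 3 ≤ q) (hqF : (q : F) = 0) {n : ℕ}
    {f : MvPolynomial (Fin n) F} (hf : f.IsHomogeneous (q + 1)) (w : Fin n → F)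
    {u : Fin 2 → Fin n → F} (hu : ∀ δ : Fin 2 → F, δ ≠ 0 → eval (∑ i, δ i • u i) f ≠ 0) :
    {P : Fin 2 → F | eval (w + ∑ i, P i • u i) f = 0}.ncard < q ^ 3 := by
  have hdeg := (totalDegree_restrictFlat_le w u f).trans hf.totalDegree_le
  simp only [← eval_restrictFlat w u f]
  refine ncard_zeros_lt_of_homogeneousComponent_ne_zero hF hq hqF hdeg fun δ hδ => ?_
  rw [← coeff_restrictLine_of_totalDegree_le hdeg 0, restrictLine_restrictFlat,
    coeff_restrictLine_self hf]
  exact hu δ hδ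

end PlaneCurves

section ZeroSet

variable {F : Type*} [Field F] {n d : ℕ} {f : MvPolynomial (Fin n) F}

/-- The affine cone of zeros of a homogeneous polynomial. -/
def zeroSet (f : MvPolynomial (Fin n) F) : Set (Fin n → F) :=
  {v | eval v f = 0}

theorem smul_mem_zeroSet (hf : f.IsHomogeneous d) (c : F) {v : Fin n → F} (hv : v ∈ zeroSet f) :
    c • v ∈ zeroSet f := by
  have hv : eval v f = 0 := hv
  simp [zeroSet, eval_smul_of_isHomogeneous hf, hv]

theorem smul_mem_zeroSet_iff (hf : f.IsHomogeneous d) {c : F} (hc : c ≠ 0) {v : Fin n → F} :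
    c • v ∈ zeroSet f ↔ v ∈ zeroSet f := by
  refine ⟨fun h => ?_, smul_mem_zeroSet hf c⟩
  simpa [inv_smul_smul₀ hc] using smul_mem_zeroSet hf c⁻¹ h

theorem zero_mem_zeroSet (hf : f.IsHomogeneous (d + 1)) : 0 ∈ zeroSet f :=
  eval_zero_of_isHomogeneous hf d.succ_ne_zero

end ZeroSet

section LineBlocking

variable {F : Type*} [Field F] {n d : ℕ} {f : MvPolynomial (Fin n) F}

/-- The zeros of `f` block all lines of the projective space: every two-dimensional subspace
contains a nonzero zero. -/
def IsLineBlocking (f : MvPolynomial (Fin n) F) : Prop :=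
  ∀ L : Submodule F (Fin n → F), finrank F L = 2 → ∃ v ∈ L, v ≠ 0 ∧ v ∈ zeroSet f

theorem isLineBlocking_of_lt [Finite F] {q : ℕ} (hF : Nat.card F = q ^ 2) (hq : 3 ≤ q)
    (hqF : (q : F) = 0) (hf : f.IsHomogeneous (q + 1))
    (hcard : (q ^ 2) ^ n * (q ^ 3 - 1) < q ^ 4 * (zeroSet f).ncard) : IsLineBlocking f := by
  intro L hL
  by_contra! hcon
  let b := finBasisOfFinrankEq F L hL
  let u (i : Fin 2) : Fin n → F := b i
  have hcomb (P : Fin 2 → F) : ∑ i, P i • u i = (b.equivFun.symm P : L) := by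
    simp [u, Basis.equivFun_symm_apply]
  have hplane (w : Fin n → F) :
      {P : Fin 2 → F | w + ∑ i, P i • u i ∈ zeroSet f}.ncard ≤ q ^ 3 - 1 := by
    refine Nat.le_sub_one_of_lt (ncard_zeros_plane_lt hF hq hqF hf w fun δ hδ => ?_)
    rw [hcomb]
    refine hcon _ (Subtype.prop _) ?_
    rwa [Ne, Submodule.coe_eq_zero, LinearEquiv.map_eq_zero_iff]
  have havg := card_mul_ncard_inter_le (A := Set.univ) (Z := zeroSet f)
    (σ := fun (P : Fin 2 → F) w => w + ∑ i, P i • u i)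
    (fun P => bijOn_add_right fun _ => Iff.rfl) fun w _ => hplane w
  rw [Set.univ_inter, Set.ncard_univ, Nat.card_fun, Nat.card_fun, Nat.card_fin, Nat.card_fin,
    hF, ← pow_mul] at havg
  exact hcard.not_ge havg

theorem IsLineBlocking.exists_add_smul_mem (hb : IsLineBlocking f) (hf : f.IsHomogeneous (d + 1))
    {P : Fin n → F} (hP : P ∉ zeroSet f) (y : Fin n → F) : ∃ t : F, y + t • P ∈ zeroSet f := by
  have hP0 : P ≠ 0 := by rintro rfl; exact hP (zero_mem_zeroSet hf)
  by_cases hy : ∃ a : F, a • P = y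
  · obtain ⟨a, rfl⟩ := hy
    exact ⟨-a, by simpa using zero_mem_zeroSet hf⟩
  · have hli : LinearIndependent F ![P, y] :=
      (LinearIndependent.pair_iff' hP0).mpr fun a ha => hy ⟨a, ha⟩
    have hL : finrank F (Submodule.span F {P, y}) = 2 := by
      rw [← Matrix.range_cons_cons_empty P y ![], finrank_span_eq_card hli, Fintype.card_fin]
    obtain ⟨v, hv, hv0, hvZ⟩ := hb _ hL
    obtain ⟨s, r, rfl⟩ := Submodule.mem_span_pair.mp hv
    have hr : r ≠ 0 := by
      rintro rfl
      rw [zero_smul, add_zero] at hv0 hvZ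
      exact hP ((smul_mem_zeroSet_iff hf (smul_ne_zero_iff.mp hv0).1).mp hvZ)
    refine ⟨r⁻¹ * s, (smul_mem_zeroSet_iff hf hr).mp ?_⟩
    rwa [smul_add, smul_smul, mul_inv_cancel_left₀ hr, add_comm]

theorem IsLineBlocking.sub_mem_zeroSet [Finite F] (hb : IsLineBlocking f)
    (hf : f.IsHomogeneous (d + 1)) {S : Submodule F (Fin n → F)}
    (hcard : Nat.card F * (↑S ∩ zeroSet f).ncard = (S : Set (Fin n → F)).ncard)
    {a b : Fin n → F} (ha : a ∈ ↑S ∩ zeroSet f) (hb' : b ∈ ↑S ∩ zeroSet f) :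
    a - b ∈ zeroSet f := by
  by_contra hab
  have hline : ∀ y ∈ (S : Set (Fin n → F)), {t : F | y + t • (a - b) ∈ zeroSet f}.ncard = 1 := by
    refine ncard_setOf_mem_eq_of_ge (σ := fun (t : F) y => y + t • (a - b)) (fun t =>
      bijOn_add_right fun v => S.add_mem_iff_left (S.smul_mem t (S.sub_mem ha.1 hb'.1)))
      (fun y _ => ?_) (by rw [hcard, mul_one])
    exact (Set.ncard_pos (Set.toFinite _)).mpr (hb.exists_add_smul_mem hf hab y)
  obtain ⟨t, ht⟩ := Set.ncard_eq_one.mp (hline b hb'.1)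
  have h0 : (0 : F) ∈ {t : F | b + t • (a - b) ∈ zeroSet f} := by simpa using hb'.2
  have h1 : (1 : F) ∈ {t : F | b + t • (a - b) ∈ zeroSet f} := by simpa using ha.2
  rw [ht, Set.mem_singleton_iff] at h0 h1
  exact zero_ne_one (h0.trans h1.symm)

theorem IsLineBlocking.exists_submodule_eq_inter [Finite F] (hb : IsLineBlocking f)
    (hf : f.IsHomogeneous (d + 1)) {S : Submodule F (Fin n → F)} {k : ℕ}
    (hS : finrank F S = k + 1) (hcard : (↑S ∩ zeroSet f).ncard = Nat.card F ^ k) :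
    ∃ π : Submodule F (Fin n → F), finrank F π = k ∧ (π : Set (Fin n → F)) = ↑S ∩ zeroSet f := by
  have hsub {a b : Fin n → F} (ha : a ∈ ↑S ∩ zeroSet f) (hb' : b ∈ ↑S ∩ zeroSet f) :
      a - b ∈ ↑S ∩ zeroSet f := by
    refine ⟨S.sub_mem ha.1 hb'.1, hb.sub_mem_zeroSet hf ?_ ha hb'⟩
    rw [ncard_submodule, hS, hcard, pow_succ']
  have h0 : 0 ∈ ↑S ∩ zeroSet f := ⟨S.zero_mem, zero_mem_zeroSet hf⟩
  let π : Submodule F (Fin n → F) :=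
    { carrier := ↑S ∩ zeroSet f
      zero_mem' := h0
      add_mem' := fun ha hb' => by simpa using hsub ha (hsub h0 hb')
      smul_mem' := fun c _ ha => ⟨S.smul_mem c ha.1, smul_mem_zeroSet hf c ha.2⟩ }
  refine ⟨π, Nat.pow_right_injective (Finite.one_lt_card (α := F)) ?_, rfl⟩
  exact (ncard_submodule π).symm.trans hcard

end LineBlocking

section SingularSubspace

variable {F : Type*} [Field F] {n d : ℕ} {f : MvPolynomial (Fin n) F}
  {π : Submodule F (Fin n → F)} {c y : Fin n → F}

theorem natDegree_restrictLine_le_of_mem_zeroSet (hf : f.IsHomogeneous (d + 1))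
    (hy : y ∈ zeroSet f) : (restrictLine c y f).natDegree ≤ d :=
  Polynomial.natDegree_le_pred (natDegree_restrictLine_le_of_isHomogeneous hf c y)
    ((coeff_restrictLine_self hf c y).trans hy)

theorem polarForm_eq_zero_of_subset [Finite F] (hf : f.IsHomogeneous (d + 1))
    (hd : d + 1 < Nat.card F) (hπ : ↑π ⊆ zeroSet f) (hy : y ∈ π) {x : Fin n → F} (hx : x ∈ π) :
    polarForm hf y x = 0 := by
  rw [polarForm_apply, restrictLine_eq_zero, Polynomial.coeff_zero]
  · exact (natDegree_restrictLine_le_of_isHomogeneous hf x y).trans_lt hd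
  · exact fun t => hπ (π.add_mem hx (π.smul_mem t hy))

theorem polarForm_add_eq_of_subset [Finite F] (hf : f.IsHomogeneous (d + 1))
    (hd : d + 1 < Nat.card F) (hπ : ↑π ⊆ zeroSet f) (hy : y ∈ π) {x : Fin n → F} (hx : x ∈ π) :
    polarForm hf y (c + x) = polarForm hf y c := by
  rw [map_add, polarForm_eq_zero_of_subset hf hd hπ hy hx, add_zero]

theorem ncard_line_le_of_polarForm_ne_zero (hf : f.IsHomogeneous (d + 1)) (hy : y ∈ zeroSet f)
    (hyc : polarForm hf y c ≠ 0) : {t : F | c + t • y ∈ zeroSet f}.ncard ≤ d :=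
  ncard_zeros_line_le (natDegree_restrictLine_le_of_mem_zeroSet hf hy) fun h0 =>
    hyc (by rw [polarForm_apply, h0, Polynomial.coeff_zero])

theorem ncard_line_le_of_polarForm_eq_zero (hf : f.IsHomogeneous (d + 1)) (hy : y ∈ zeroSet f)
    (hyc : polarForm hf y c = 0) (hc : c ∉ zeroSet f) :
    {t : F | c + t • y ∈ zeroSet f}.ncard ≤ d - 1 :=
  ncard_zeros_line_le (Polynomial.natDegree_le_pred
    (natDegree_restrictLine_le_of_mem_zeroSet hf hy) hyc) (restrictLine_ne_zero_of_eval_ne_zero hc)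

theorem exists_add_notMem_zeroSet (hf : f.IsHomogeneous d) {k : ℕ}
    (hmax : ∀ W : Submodule F (Fin n → F), finrank F W = k + 1 → ¬ ↑W ⊆ zeroSet f)
    (hk : finrank F π = k) (hπ : ↑π ⊆ zeroSet f) (hc : c ∉ π) : ∃ x ∈ π, c + x ∉ zeroSet f := by
  by_contra! hcon
  refine hmax (π ⊔ F ∙ c) (by rw [Submodule.finrank_sup_span_singleton hc, hk]) fun v hv => ?_
  obtain ⟨x, hx, w, hw, rfl⟩ := Submodule.mem_sup.mp hv
  obtain ⟨s, rfl⟩ := Submodule.mem_span_singleton.mp hw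
  rcases eq_or_ne s 0 with rfl | hs
  · simpa using hπ hx
  · rw [← smul_mem_zeroSet_iff hf (inv_ne_zero hs), smul_add, inv_smul_smul₀ hs, add_comm]
    exact hcon _ (π.smul_mem _ hx)

theorem card_mul_ncard_coset_le [Finite F] (hf : f.IsHomogeneous (d + 1)) (hd : d + 1 < Nat.card F)
    (hπ : ↑π ⊆ zeroSet f) (hy : y ∈ π) (hyc : polarForm hf y c ≠ 0) :
    Nat.card F * {x : π | c + x ∈ zeroSet f}.ncard ≤ Nat.card π * d := by
  have hline (x : π) : {t : F | c + ↑(x + t • (⟨y, hy⟩ : π)) ∈ zeroSet f}.ncard ≤ d := by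
    have hyx : polarForm hf y (c + x) ≠ 0 := by
      rwa [polarForm_add_eq_of_subset hf hd hπ hy x.2]
    simpa [add_assoc] using ncard_line_le_of_polarForm_ne_zero hf (hπ hy) hyx
  simpa using card_mul_ncard_inter_le (A := Set.univ) (Z := {x : π | c + x ∈ zeroSet f})
    (σ := fun (t : F) x => x + t • (⟨y, hy⟩ : π)) (fun t => bijOn_add_right fun _ => Iff.rfl)
    fun x _ => hline x

theorem ncard_coset_le_of_polarForm_eq_zero [Finite F] (hf : f.IsHomogeneous (d + 1))
    (hd : d + 1 < Nat.card F) (hπ : ↑π ⊆ zeroSet f) (h : ∀ y ∈ π, polarForm hf y c = 0)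
    {x₀ : Fin n → F} (hx₀ : x₀ ∈ π) (hx₀Z : c + x₀ ∉ zeroSet f) :
    {x : π | c + x ∈ zeroSet f}.ncard ≤
      (d - 1) * ∑ i ∈ Finset.range (finrank F π), Nat.card F ^ i := by
  have hO : (⟨x₀, hx₀⟩ : π) ∉ {x : π | c + x ∈ zeroSet f} := hx₀Z
  rw [← Set.sdiff_singleton_eq_self hO]
  refine ncard_diff_singleton_le_of_star fun y _ => ?_
  have hyx : polarForm hf y (c + x₀) = 0 := by
    rw [polarForm_add_eq_of_subset hf hd hπ y.2 hx₀, h y y.2]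
  refine (Set.ncard_le_ncard ?_ (Set.toFinite _)).trans
    (ncard_line_le_of_polarForm_eq_zero hf (hπ y.2) hyx hx₀Z)
  rintro t ⟨-, ht⟩
  simpa [add_assoc] using ht

end SingularSubspace

section PlaneSection

variable {F : Type*} [Field F] {q : ℕ} {f : MvPolynomial (Fin 7) F}
  {π S : Submodule F (Fin 7 → F)} {c : Fin 7 → F}

/-- The hypotheses on the hypersurface `f = 0`, in terms of its cone of zeros: it has degree `q + 1`
over the field with `q ^ 2` elements, contains no solid, has the number of points of the theorem and
meets the solid `S` exactly in the plane `π`. A set of `N` projective points has a cone of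
`N * (q ^ 2 - 1) + 1` vectors, and `ncard_zeroSet` is this count with the subtraction cleared. -/
structure IsPlaneSection (q : ℕ) (f : MvPolynomial (Fin 7) F) (π S : Submodule F (Fin 7 → F)) :
    Prop where
  three_le : 3 ≤ q
  card_field : Nat.card F = q ^ 2
  isHomogeneous : f.IsHomogeneous (q + 1)
  ncard_zeroSet : (zeroSet f).ncard + q ^ 7 = q ^ 13 + q ^ 6
  not_subset (W : Submodule F (Fin 7 → F)) : finrank F W = 4 → ¬ ↑W ⊆ zeroSet f
  finrank_plane : finrank F π = 3
  finrank_solid : finrank F S = 4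
  plane_eq : (π : Set (Fin 7 → F)) = ↑S ∩ zeroSet f

namespace IsPlaneSection

theorem finite (h : IsPlaneSection q f π S) : Finite F :=
  Nat.finite_of_card_ne_zero (by have := h.three_le; rw [h.card_field]; positivity)

theorem succ_lt_card (h : IsPlaneSection q f π S) : q + 1 < Nat.card F := by
  have := h.three_le
  rw [h.card_field]
  nlinarith

theorem plane_subset (h : IsPlaneSection q f π S) : ↑π ⊆ zeroSet f :=
  h.plane_eq.trans_subset Set.inter_subset_right

theorem plane_le (h : IsPlaneSection q f π S) : π ≤ S :=
  h.plane_eq.trans_subset Set.inter_subset_left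

theorem natCard_plane (h : IsPlaneSection q f π S) : Nat.card π = q ^ 6 := by
  have := h.finite
  rw [natCard_eq_pow_finrank (K := F), h.card_field, h.finrank_plane, ← pow_mul]

theorem ncard_coset_le (h : IsPlaneSection q f π S) (hc : c ∉ π) :
    {x : π | c + x ∈ zeroSet f}.ncard ≤ q ^ 5 := by
  have := h.finite
  have hq := h.three_le
  by_cases hpol : ∃ y ∈ π, polarForm h.isHomogeneous y c ≠ 0
  · obtain ⟨y, hy, hyc⟩ := hpol
    have hle := card_mul_ncard_coset_le h.isHomogeneous h.succ_lt_card h.plane_subset hy hyc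
    rw [h.card_field, h.natCard_plane] at hle
    exact Nat.le_of_mul_le_mul_left (hle.trans_eq (by ring)) (by positivity : 0 < q ^ 2)
  · push Not at hpol
    obtain ⟨x₀, hx₀, hx₀Z⟩ := exists_add_notMem_zeroSet h.isHomogeneous h.not_subset
      h.finrank_plane h.plane_subset hc
    refine (ncard_coset_le_of_polarForm_eq_zero h.isHomogeneous h.succ_lt_card h.plane_subset
      hpol hx₀ hx₀Z).trans ?_
    obtain ⟨m, rfl⟩ := Nat.exists_eq_add_of_le' hq
    simp only [h.finrank_plane, h.card_field, Finset.sum_range_succ, Finset.sum_range_zero]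
    rw [show m + 3 - 1 = m + 2 from rfl]
    ring_nf
    nlinarith

theorem ncard_compl_inter (h : IsPlaneSection q f π S) :
    ((S : Set (Fin 7 → F))ᶜ ∩ zeroSet f).ncard + q ^ 7 = q ^ 13 := by
  have := h.finite
  have hZ : (S : Set (Fin 7 → F))ᶜ ∩ zeroSet f = zeroSet f \ ↑π := by
    rw [h.plane_eq, Set.sdiff_inter_self_eq_sdiff, Set.inter_comm, Set.sdiff_eq]
  have hdiff := Set.ncard_sdiff_add_ncard_of_subset h.plane_subset
  rw [← hZ, ncard_submodule, h.finrank_plane, h.card_field, ← pow_mul] at hdiff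
  simp only [Nat.reduceMul] at hdiff
  have := h.ncard_zeroSet
  omega

theorem ncard_coset_eq (h : IsPlaneSection q f π S) (hc : c ∉ S) :
    {x : π | c + x ∈ zeroSet f}.ncard = q ^ 5 := by
  have := h.finite
  refine ncard_setOf_mem_eq_of_le (σ := fun (x : π) v => v + (x : Fin 7 → F)) (A := (S : Set _)ᶜ)
    (fun x => bijOn_add_right fun v => not_congr (S.add_mem_iff_left (h.plane_le x.2)))
    (fun v hv => h.ncard_coset_le fun hvπ => hv (h.plane_le hvπ)) ?_ c hc
  have hS := Set.ncard_add_ncard_compl (S : Set (Fin 7 → F))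
  rw [ncard_submodule, h.finrank_solid, Nat.card_fun, Nat.card_fin, h.card_field] at hS
  have hZ := h.ncard_compl_inter
  rw [h.natCard_plane]
  zify at hS hZ ⊢
  linear_combination (q : ℤ) ^ 6 * hZ - (q : ℤ) ^ 5 * hS

end IsPlaneSection

end PlaneSection

section FullPlane

variable {F E : Type*} [Field F] [Finite F] [AddCommGroup E] [Module F E] {Z : Set E} {k : ℕ}
  {R y v : E}

theorem ncard_plane_le {O : E} (hO : O ∉ Z)
    (hline : ∀ x y : E, {t : F | x + t • y ∈ Z}.ncard ≤ k ∨ ∀ t : F, x + t • y ∈ Z)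
    (hOR : ∃ a b : F, R + (a • y + b • v) = O) :
    {p : F × F | R + (p.1 • y + p.2 • v) ∈ Z}.ncard ≤ k * (Nat.card F + 1) := by
  obtain ⟨a, b, rfl⟩ := hOR
  have hO' : (a, b) ∉ {p : F × F | R + (p.1 • y + p.2 • v) ∈ Z} := hO
  rw [← Set.sdiff_singleton_eq_self hO']
  refine (ncard_diff_singleton_le_of_star (F := F) (b := k) fun w _ => ?_).trans_eq ?_
  · have hw := (hline (R + (a • y + b • v)) (w.1 • y + w.2 • v)).resolve_right fun h =>
      hO (by simpa using h 0)
    refine (Set.ncard_le_ncard ?_ (Set.toFinite _)).trans hw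
    rintro t ⟨-, ht⟩
    rw [Set.mem_ofPred_eq] at ht ⊢
    convert ht using 1
    simp only [Prod.fst_add, Prod.snd_add, Prod.smul_fst, Prod.smul_snd, smul_eq_mul]
    module
  · rw [finrank_prod, finrank_self, Finset.sum_range_succ, Finset.sum_range_one, pow_zero, pow_one,
      add_comm 1]

theorem ncard_plane_off_line_add_le (hy : ∀ t : F, R + t • y ∈ Z)
    (hline : ∀ x y : E, {t : F | x + t • y ∈ Z}.ncard ≤ k ∨ ∀ t : F, x + t • y ∈ Z)
    (hplane : ∃ a b : F, R + (a • y + b • v) ∉ Z) :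
    {e : F × Fˣ | (e.1 • y + e.2 • v) + R ∈ Z}.ncard + Nat.card F ≤ k * (Nat.card F + 1) := by
  obtain ⟨a, b, hab⟩ := hplane
  refine le_trans ?_ (ncard_plane_le (y := y) (v := v) hab hline ⟨a, b, rfl⟩)
  let ι : F × Fˣ → F × F := Prod.map id Units.val
  have hι : ι.Injective := Function.injective_id.prodMap Units.val_injective
  have hj : Function.Injective fun a : F => (a, (0 : F)) := Prod.mk_left_injective 0
  rw [← Set.ncard_image_of_injective _ hι, ← Set.ncard_univ F, ← Set.ncard_image_of_injective _ hj,
    ← Set.ncard_union_eq ?_ (Set.toFinite _) (Set.toFinite _)]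
  · refine Set.ncard_le_ncard ?_ (Set.toFinite _)
    rintro _ (⟨e, he, rfl⟩ | ⟨a, -, rfl⟩)
    · simpa [ι, add_comm, Units.smul_def] using he
    · simpa using hy a
  · rw [Set.disjoint_left]
    rintro _ ⟨e, -, rfl⟩ ⟨a, -, h⟩
    exact e.2.ne_zero (congrArg Prod.snd h).symm

theorem card_mul_ncard_le_of_line_subset [Module.Finite F E] (hy0 : y ≠ 0)
    (hy : ∀ t : F, R + t • y ∈ Z)
    (hline : ∀ x y : E, {t : F | x + t • y ∈ Z}.ncard ≤ k ∨ ∀ t : F, x + t • y ∈ Z)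
    (hplane : ∀ v ∉ F ∙ y, ∃ a b : F, R + (a • y + b • v) ∉ Z) :
    Nat.card F * (Nat.card F - 1) * (Z.ncard - Nat.card F) ≤
      (Nat.card E - Nat.card F) * (k * (Nat.card F + 1) - Nat.card F) := by
  have := Module.finite_of_finite F (M := E)
  let Y := F ∙ y
  have hYcard : (Y : Set E).ncard = Nat.card F := by
    rw [ncard_submodule, finrank_span_singleton hy0, pow_one]
  have hbij (e : F × Fˣ) :
      Set.BijOn (fun v : E => e.1 • y + e.2 • v) (Y : Set E)ᶜ (Y : Set E)ᶜ := by
    refine ((MulAction.toPerm e.2).trans (Equiv.addLeft (e.1 • y))).bijOn fun v => not_congr ?_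
    have hey : e.1 • y ∈ Y := Y.smul_mem _ (Submodule.mem_span_singleton_self y)
    exact (Y.add_mem_iff_right hey).trans (Y.smul_mem_iff e.2.ne_zero)
  have havg := card_mul_ncard_inter_le (Z := (· + R) ⁻¹' Z) hbij fun v hv =>
    Nat.le_sub_of_add_le (ncard_plane_off_line_add_le hy hline (hplane v hv))
  have himage : (· + R) '' ((Y : Set E)ᶜ ∩ (· + R) ⁻¹' Z) = Z \ (· + R) '' (Y : Set E) := by
    have hR : Function.Bijective (· + R) := (Equiv.addRight R).bijective
    rw [Set.image_inter_preimage, Set.image_compl_eq hR, Set.inter_comm, Set.sdiff_eq]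
  have hYZ : (· + R) '' (Y : Set E) ⊆ Z := by
    rintro _ ⟨w, hw, rfl⟩
    obtain ⟨t, rfl⟩ := Submodule.mem_span_singleton.mp hw
    simpa [add_comm] using hy t
  rwa [Nat.card_prod, Nat.card_units, Set.ncard_compl, hYcard,
    ← Set.ncard_image_of_injective _ (add_left_injective R), himage,
    Set.ncard_sdiff hYZ, Set.ncard_image_of_injective _ (add_left_injective R), hYcard] at havg

theorem exists_line_subset {q : ℕ} (hF : Nat.card F = q ^ 2) (hq : 3 ≤ q) (hE : finrank F E = 3)
    (hline : ∀ x y : E, {t : F | x + t • y ∈ Z}.ncard ≤ q ∨ ∀ t : F, x + t • y ∈ Z)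
    (hZ : Z.ncard = q ^ 5) (hR : R ∈ Z) : ∃ y : E, y ≠ 0 ∧ ∀ t : F, R + t • y ∈ Z := by
  by_contra! hcon
  have : Module.Finite F E := Module.finite_of_finrank_eq_succ hE
  obtain ⟨b, rfl⟩ := Nat.exists_eq_add_of_le' (Nat.one_le_of_lt hq)
  have hle := ncard_le_of_star hR fun y hy => (hline R y).resolve_right fun h =>
    let ⟨t, ht⟩ := hcon y hy; ht (h t)
  simp only [hZ, hE, hF, Finset.sum_range_succ, Finset.sum_range_zero] at hle
  ring_nf at hle
  nlinarith

theorem exists_plane_subset {q : ℕ} (hF : Nat.card F = q ^ 2) (hq : 3 ≤ q) (hE : finrank F E = 3)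
    (hline : ∀ x y : E, {t : F | x + t • y ∈ Z}.ncard ≤ q ∨ ∀ t : F, x + t • y ∈ Z)
    (hZ : Z.ncard = q ^ 5) (hy0 : y ≠ 0) (hy : ∀ t : F, R + t • y ∈ Z) :
    ∃ v ∉ F ∙ y, ∀ a b : F, R + (a • y + b • v) ∈ Z := by
  by_contra! hcon
  have : Module.Finite F E := Module.finite_of_finrank_eq_succ hE
  have hle := card_mul_ncard_le_of_line_subset hy0 hy hline hcon
  rw [natCard_eq_pow_finrank (K := F) (V := E), hE, hZ, hF] at hle
  have h1 : 1 ≤ q ^ 2 := Nat.one_le_pow _ _ (by omega)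
  have h2 : q ^ 2 ≤ q ^ 5 := Nat.pow_le_pow_right (by omega) (by omega)
  have h3 : q ^ 2 ≤ (q ^ 2) ^ 3 := Nat.le_self_pow (by omega) _
  have h4 : q ^ 2 ≤ q * (q ^ 2 + 1) := by nlinarith
  zify [h1, h2, h3, h4] at hle hq
  have hpos : (0 : ℤ) < q ^ 2 * (q ^ 2 - 1) := by nlinarith [sq_nonneg (q : ℤ)]
  have hle' : (q : ℤ) ^ 5 - q ^ 2 ≤ (q ^ 2 + 1) * (q * (q ^ 2 + 1) - q ^ 2) :=
    le_of_mul_le_mul_left (hle.trans_eq (by ring)) hpos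
  nlinarith [pow_pos (by linarith : (0 : ℤ) < q) 3, pow_pos (by linarith : (0 : ℤ) < q) 2]

theorem exists_dual_eq_imp_mem {q : ℕ} (hF : Nat.card F = q ^ 2) (hq : 3 ≤ q)
    (hE : finrank F E = 3)
    (hline : ∀ x y : E, {t : F | x + t • y ∈ Z}.ncard ≤ q ∨ ∀ t : F, x + t • y ∈ Z)
    (hZ : Z.ncard = q ^ 5) :
    ∃ (l : Dual F E) (R : E), l ≠ 0 ∧ ∀ x, l x = l R → x ∈ Z := by
  have : Module.Finite F E := Module.finite_of_finrank_eq_succ hE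
  obtain ⟨R, hR⟩ := Set.nonempty_of_ncard_ne_zero (hZ.trans_ne (by positivity))
  obtain ⟨y, hy0, hy⟩ := exists_line_subset hF hq hE hline hZ hR
  obtain ⟨v, hv, hplane⟩ := exists_plane_subset hF hq hE hline hZ hy0 hy
  have hP : finrank F ↥(F ∙ y ⊔ F ∙ v) = 2 := by
    rw [Submodule.finrank_sup_span_singleton hv, finrank_span_singleton hy0]
  obtain ⟨l, hl0, hl⟩ := Submodule.exists_le_ker_of_lt_top (F ∙ y ⊔ F ∙ v)
    (lt_top_iff_ne_top.mpr fun h => by rw [h, finrank_top, hE] at hP; omega)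
  refine ⟨l, R, hl0, fun x hx => ?_⟩
  have hker : F ∙ y ⊔ F ∙ v = LinearMap.ker l := by
    refine Submodule.eq_of_le_of_finrank_eq hl ?_
    have := Module.Dual.finrank_ker_add_one_of_ne_zero hl0
    omega
  have hxR : x - R ∈ F ∙ y ⊔ F ∙ v := by
    rw [hker, LinearMap.mem_ker, map_sub, hx, sub_self]
  obtain ⟨_, hw, _, hw', hsum⟩ := Submodule.mem_sup.mp hxR
  obtain ⟨a, rfl⟩ := Submodule.mem_span_singleton.mp hw
  obtain ⟨b, rfl⟩ := Submodule.mem_span_singleton.mp hw'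
  simpa [hsum] using hplane a b

end FullPlane

section ParallelLines

variable {F : Type*} [Field F] [Finite F] {n d : ℕ} {f : MvPolynomial (Fin n) F}
  {O y m : Fin n → F} {K : Set F}

theorem coeff_restrictLine_eq_zero_of_parallel (hf : f.IsHomogeneous (d + 1))
    (hy : restrictLine y m f = 0) (hK : ∀ s ∈ K, restrictLine (O + s • y) m f = 0) {i : ℕ}
    (hi : d < i + K.ncard) : (restrictLine O m f).coeff i = 0 := by
  rcases lt_or_ge (d + 1) i with hid | hid
  · exact Polynomial.coeff_eq_zero_of_natDegree_lt
      ((natDegree_restrictLine_le_of_isHomogeneous hf O m).trans_lt hid)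
  obtain ⟨j, hij⟩ := Nat.exists_eq_add_of_le hid
  have hg := isHomogeneous_lineCoeff hf m hij.symm
  have htop : (restrictLine O y (lineCoeff m f i)).coeff j = 0 := by
    rw [coeff_restrictLine_self hg, eval_lineCoeff, hy, Polynomial.coeff_zero]
  have hdeg := natDegree_restrictLine_le_of_isHomogeneous hg O y
  have hzero : restrictLine O y (lineCoeff m f i) = 0 := by
    by_contra hne
    have hKle : K.ncard ≤ (restrictLine O y (lineCoeff m f i)).natDegree := by
      refine (Set.ncard_le_ncard (fun s hs => ?_) (Set.toFinite _)).trans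
        (ncard_zeros_line_le le_rfl hne)
      rw [Set.mem_ofPred_eq, eval_lineCoeff, hK s hs, Polynomial.coeff_zero]
    have hj : (restrictLine O y (lineCoeff m f i)).natDegree = j := by omega
    exact hne (Polynomial.leadingCoeff_eq_zero.mp (by rwa [Polynomial.leadingCoeff, hj]))
  rw [← eval_lineCoeff, ← coeff_zero_restrictLine O y, hzero, Polynomial.coeff_zero]

theorem natDegree_restrictLine_le_of_parallel (hf : f.IsHomogeneous (d + 1))
    (hy : restrictLine y m f = 0) (hK : ∀ s ∈ K, restrictLine (O + s • y) m f = 0) :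
    (restrictLine O m f).natDegree ≤ d - K.ncard :=
  Polynomial.natDegree_le_iff_coeff_eq_zero.mpr fun _ hi =>
    coeff_restrictLine_eq_zero_of_parallel hf hy hK (by omega)

end ParallelLines

section Slices

variable {F E : Type*} [Field F] [Finite F] [AddCommGroup E] [Module F E] [Finite E]

theorem card_mul_ncard_preimage_dual {l : Dual F E} (hl : l ≠ 0) (K : Set F) :
    Nat.card F * (l ⁻¹' K).ncard = Nat.card E * K.ncard := by
  obtain ⟨y, hy⟩ := LinearMap.surjective hl 1
  have hfib (x : E) : {t : F | x + t • y ∈ l ⁻¹' K}.ncard = K.ncard := by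
    rw [← Set.ncard_image_of_injective K (sub_left_injective (b := l x))]
    congr 1
    ext t
    simp [hy, add_comm (l x), sub_eq_iff_eq_add]
  simpa using card_mul_ncard_inter_eq (A := Set.univ) (σ := fun (t : F) x => x + t • y)
    (fun t => bijOn_add_right fun _ => Iff.rfl) fun x _ => hfib x

theorem ncard_inter_preimage_dual_le {l : Dual F E} {Z : Set E} {O : E} {b : ℕ} (hO : O ∉ Z)
    (h : ∀ m, l m = 0 → {t : F | O + t • m ∈ Z}.ncard ≤ b) :
    (Z ∩ l ⁻¹' {l O}).ncard ≤
      b * ∑ i ∈ Finset.range (finrank F (LinearMap.ker l)), Nat.card F ^ i := by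
  let Z₀ : Set (LinearMap.ker l) := {m | O + m ∈ Z}
  have hO₀ : 0 ∉ Z₀ := by simpa [Z₀] using hO
  have hsub : Z ∩ l ⁻¹' {l O} ⊆ (fun m : LinearMap.ker l => O + m) '' Z₀ := by
    rintro x ⟨hx, hlx : l x = l O⟩
    exact ⟨⟨x - O, by simp [hlx]⟩, by simpa [Z₀] using hx, by simp⟩
  refine (Set.ncard_le_ncard hsub (Set.toFinite _)).trans
    ((Set.ncard_image_le (Set.toFinite _)).trans ?_)
  rw [← Set.sdiff_singleton_eq_self hO₀]
  refine ncard_diff_singleton_le_of_star fun m _ => ?_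
  refine (Set.ncard_le_ncard ?_ (Set.toFinite _)).trans (h m m.2)
  rintro t ⟨-, ht⟩
  simpa [Z₀] using ht

theorem ncard_inter_preimage_le {α β : Type*} [Finite α] [Finite β] (g : α → β) (Z : Set α)
    {T : Set β} {b : ℕ} (h : ∀ s ∈ T, (Z ∩ g ⁻¹' {s}).ncard ≤ b) :
    (Z ∩ g ⁻¹' T).ncard ≤ b * T.ncard := by
  classical
  have := Fintype.ofFinite α
  have := Fintype.ofFinite β
  rw [Set.ncard_eq_toFinset_card', Set.ncard_eq_toFinset_card']
  refine Finset.card_le_mul_card_image_of_maps_to (f := g) (by simp) b fun s hs => ?_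
  refine le_trans (le_of_eq ?_) (h s (by simpa using hs))
  rw [Set.ncard_eq_toFinset_card']
  congr 1
  ext x
  simp only [Set.mem_toFinset] at hs
  simp only [Finset.mem_filter, Set.mem_toFinset, Set.mem_inter_iff, Set.mem_preimage,
    Set.mem_singleton_iff]
  exact ⟨fun hx => ⟨hx.1.1, hx.2⟩, fun hx => ⟨⟨hx.1, hx.2 ▸ hs⟩, hx.2⟩⟩

end Slices

section CosetStructure

variable {F : Type*} [Field F] [Finite F] {n d : ℕ} {f : MvPolynomial (Fin n) F}
  {π : Submodule F (Fin n → F)} {c : Fin n → F}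

theorem ncard_line_le_of_parallel (hf : f.IsHomogeneous (d + 1)) (hd : d + 1 < Nat.card F)
    (hπ : ↑π ⊆ zeroSet f) {l : Dual F π} (hl : l ≠ 0) {K : Set F}
    (hK : ∀ x : π, l x ∈ K → c + x ∈ zeroSet f) {O m : π} (hO : c + O ∉ zeroSet f) (hm : l m = 0) :
    {t : F | c + ↑(O + t • m) ∈ zeroSet f}.ncard ≤ d - K.ncard := by
  obtain ⟨y, hy⟩ := LinearMap.surjective hl 1
  have hvanish {u : Fin n → F} (h : ∀ t : F, u + t • (m : Fin n → F) ∈ zeroSet f) :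
      restrictLine u (m : Fin n → F) f = 0 :=
    restrictLine_eq_zero ((natDegree_restrictLine_le_of_isHomogeneous hf _ _).trans_lt hd) h
  have hdeg : (restrictLine (c + (O : Fin n → F)) m f).natDegree ≤ d - K.ncard := by
    rw [← Set.ncard_image_of_injective K (sub_left_injective (b := l O))]
    refine natDegree_restrictLine_le_of_parallel (y := y) hf (hvanish fun t => hπ (y + t • m).2) ?_
    rintro _ ⟨s, hs, rfl⟩
    refine hvanish fun t => ?_
    simpa [add_assoc] using hK (O + ((s - l O) • y + t • m)) (by simpa [hy, hm] using hs)
  simpa [add_assoc, zeroSet] using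
    ncard_zeros_line_le hdeg (restrictLine_ne_zero_of_eval_ne_zero hO)

theorem eq_and_eq_zero_of_pow_mul_add_eq {q k N : ℕ} (hq : 0 < q) (hk : 1 ≤ k)
    (hkN : q ^ 4 * k + N = q ^ 5) (hN : N ≤ (q - k) * (1 + q ^ 2) * (q ^ 2 - k)) :
    k = q ∧ N = 0 := by
  have hkq : k ≤ q := Nat.le_of_mul_le_mul_left (by linarith [pow_succ q 4]) (pow_pos hq 4)
  rcases hkq.eq_or_lt with rfl | hlt
  · exact ⟨rfl, by linarith [pow_succ k 4]⟩
  · exfalso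
    obtain ⟨r, hr⟩ := Nat.exists_eq_add_of_lt hlt
    have hN' : N = (r + 1) * q ^ 4 := by
      have : q ^ 5 = (k + r + 1) * q ^ 4 := by rw [← hr]; ring
      linarith
    have hbound : (r + 1) * q ^ 4 ≤ (r + 1) * ((1 + q ^ 2) * (q ^ 2 - 1)) := by
      rw [← hN', ← mul_assoc, show r + 1 = q - k by omega]
      exact hN.trans (Nat.mul_le_mul_left _ (Nat.sub_le_sub_left hk _))
    have hsq : (1 + q ^ 2) * (q ^ 2 - 1) + 1 = q ^ 4 := by
      have h1 : 1 ≤ q ^ 2 := Nat.one_le_pow _ _ hq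
      zify [h1]
      ring
    have := Nat.le_of_mul_le_mul_left hbound r.succ_pos
    omega

theorem exists_dual_mem_iff {q : ℕ} (hF : Nat.card F = q ^ 2) (hq : 3 ≤ q)
    (hf : f.IsHomogeneous (q + 1)) (hπ : ↑π ⊆ zeroSet f) (hπ3 : finrank F π = 3)
    (hN : {x : π | c + x ∈ zeroSet f}.ncard = q ^ 5) :
    ∃ (l : Dual F π) (K : Set F), l ≠ 0 ∧ K.ncard = q ∧
      ∀ x : π, c + x ∈ zeroSet f ↔ l x ∈ K := by
  have hd : q + 1 < Nat.card F := by rw [hF]; nlinarith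
  set Z : Set π := {x : π | c + x ∈ zeroSet f}
  have hline (x y : π) : {t : F | x + t • y ∈ Z}.ncard ≤ q ∨ ∀ t : F, x + t • y ∈ Z := by
    by_cases h0 : restrictLine (c + (x : Fin n → F)) (y : Fin n → F) f = 0
    · refine .inr fun t => ?_
      have h := eval_restrictLine (c + (x : Fin n → F)) (y : Fin n → F) f t
      rw [h0, Polynomial.eval_zero] at h
      simpa [Z, zeroSet, add_assoc] using h.symm
    · refine .inl ?_
      simpa [Z, zeroSet, add_assoc] using ncard_zeros_line_le
        (natDegree_restrictLine_le_of_mem_zeroSet hf (hπ y.2)) h0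
  obtain ⟨l, R, hl, hR⟩ := exists_dual_eq_imp_mem hF hq hπ3 hline hN
  let K : Set F := {s | ∀ x : π, l x = s → x ∈ Z}
  have hKZ : l ⁻¹' K ⊆ Z := fun x hx => hx x rfl
  have hcardK : (l ⁻¹' K).ncard = q ^ 4 * K.ncard := by
    have h := card_mul_ncard_preimage_dual hl K
    rw [natCard_eq_pow_finrank (K := F) (V := π), hπ3, hF] at h
    exact Nat.eq_of_mul_eq_mul_left (by positivity : 0 < q ^ 2) (h.trans (by ring))
  have hker : finrank F (LinearMap.ker l) = 2 := by
    have := Module.Dual.finrank_ker_add_one_of_ne_zero hl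
    omega
  have hrest : (Z ∩ l ⁻¹' Kᶜ).ncard ≤ (q - K.ncard) * (1 + q ^ 2) * (q ^ 2 - K.ncard) := by
    rw [← hF, ← Set.ncard_compl]
    refine ncard_inter_preimage_le l Z fun s hs => ?_
    obtain ⟨O, rfl, hO⟩ : ∃ O, l O = s ∧ O ∉ Z := by
      simpa [K] using hs
    refine (ncard_inter_preimage_dual_le hO fun m hm =>
      ncard_line_le_of_parallel hf hd hπ hl (K := K) hKZ hO hm).trans_eq ?_
    rw [hker, Finset.sum_range_succ, Finset.sum_range_one, pow_zero, pow_one]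
  have hsplit : (l ⁻¹' K).ncard + (Z ∩ l ⁻¹' Kᶜ).ncard = q ^ 5 := by
    rw [← hN, add_comm, Set.preimage_compl, ← Set.sdiff_eq,
      Set.ncard_sdiff_add_ncard_of_subset hKZ (Set.toFinite _)]
  have hK0 : 1 ≤ K.ncard := (Set.ncard_pos (Set.toFinite _)).mpr ⟨l R, hR⟩
  obtain ⟨hKq, hempty⟩ := eq_and_eq_zero_of_pow_mul_add_eq (by omega) hK0 (hcardK ▸ hsplit) hrest
  refine ⟨l, K, hl, hKq, fun x => ⟨fun hx => ?_, @hKZ x⟩⟩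
  by_contra hxK
  rw [Set.ncard_eq_zero (Set.toFinite _)] at hempty
  exact (Set.eq_empty_iff_forall_notMem.mp hempty x) ⟨hx, hxK⟩

theorem polarForm_eq_zero_iff {q : ℕ} (hF : Nat.card F = q ^ 2) (hq : 2 ≤ q)
    (hf : f.IsHomogeneous (q + 1)) (hπ : ↑π ⊆ zeroSet f) {l : Dual F π} {K : Set F} (hl : l ≠ 0)
    (hKq : K.ncard = q) (hK : ∀ x : π, c + x ∈ zeroSet f ↔ l x ∈ K) (y : π) :
    polarForm hf y c = 0 ↔ l y = 0 := by
  have hd : q + 1 < Nat.card F := by rw [hF]; nlinarith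
  have hadd (x : π) : polarForm hf y (c + x) = polarForm hf y c :=
    polarForm_add_eq_of_subset hf hd hπ y.2 x.2
  have hline (x : π) (t : F) : c + x + t • (y : Fin n → F) ∈ zeroSet f ↔ l x + t * l y ∈ K := by
    simpa [add_assoc] using hK (x + t • y)
  have hKproper : K ≠ Set.univ := by
    rintro rfl
    rw [Set.ncard_univ, hF] at hKq
    nlinarith
  constructor
  · intro hpol
    by_contra hly
    obtain ⟨s, hs⟩ := (Set.ne_univ_iff_exists_notMem K).mp hKproper
    obtain ⟨x, rfl⟩ := LinearMap.surjective hl s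
    have hle := ncard_line_le_of_polarForm_eq_zero hf (hπ y.2) ((hadd x).trans hpol)
      fun hx => hs ((hK x).mp hx)
    have hbij : Function.Bijective fun t : F => l x + t * l y :=
      (AddGroup.addLeft_bijective (l x)).comp (mulRight_bijective₀ _ hly)
    have hcard := Set.ncard_preimage_of_injective_subset_range (s := K) hbij.injective
      (by simp [hbij.surjective.range_eq])
    simp only [hline] at hle
    exact absurd (hcard.symm.trans_le hle) (by omega)
  · intro hly
    obtain ⟨s, hs⟩ : K.Nonempty := Set.nonempty_of_ncard_ne_zero (by omega)
    obtain ⟨x, rfl⟩ := LinearMap.surjective hl s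
    rw [← hadd x, polarForm_apply, restrictLine_eq_zero, Polynomial.coeff_zero]
    · exact (natDegree_restrictLine_le_of_isHomogeneous hf _ _).trans_lt hd
    · exact fun t => (hline x t).mpr (by simpa [hly] using hs)

end CosetStructure

theorem sum_ncard_comm {α β : Type*} [Fintype α] [Fintype β] (r : α → β → Prop) :
    ∑ a, {b | r a b}.ncard = ∑ b, {a | r a b}.ncard := by
  classical
  simp only [Set.ncard_eq_toFinset_card', Set.toFinset_ofPred]
  exact Finset.sum_card_bipartiteAbove_eq_sum_card_bipartiteBelow r

section TangentHyperplanes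

variable {F V : Type*} [Field F] [Finite F] [AddCommGroup V] [Module F V] [Module.Finite F V]
  {S : Submodule F V} {n : ℕ}

theorem ncard_ker_diff_add (S : Submodule F V) (μ : Dual F V) :
    ((LinearMap.ker μ : Set V) \ S).ncard + Nat.card F ^ finrank F ↥(LinearMap.ker μ ⊓ S) =
      Nat.card F ^ finrank F (LinearMap.ker μ) := by
  have := Module.finite_of_finite F (M := V)
  rw [← ncard_submodule, ← ncard_submodule, Submodule.coe_inf, ← Set.sdiff_inter_self_eq_sdiff,
    Set.inter_comm]
  exact Set.ncard_sdiff_add_ncard_of_subset Set.inter_subset_left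

theorem pow_le_ncard_ker_diff_add (hV : finrank F V = n + 1) (S : Submodule F V) (μ : Dual F V) :
    Nat.card F ^ n ≤ ((LinearMap.ker μ : Set V) \ S).ncard + Nat.card F ^ finrank F S := by
  have hker : n ≤ finrank F (LinearMap.ker μ) := by
    rcases eq_or_ne μ 0 with rfl | hμ
    · rw [LinearMap.ker_zero, finrank_top]
      omega
    · have := Module.Dual.finrank_ker_add_one_of_ne_zero hμ
      omega
  calc Nat.card F ^ n ≤ Nat.card F ^ finrank F (LinearMap.ker μ) :=
        Nat.pow_le_pow_right Nat.card_pos hker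
    _ = _ := (ncard_ker_diff_add S μ).symm
    _ ≤ _ := Nat.add_le_add_left
        (Nat.pow_le_pow_right Nat.card_pos (Submodule.finrank_mono inf_le_right)) _

theorem le_ker_of_ncard_eq (hV : finrank F V = n + 1) {μ : Dual F V}
    (h : ((LinearMap.ker μ : Set V) \ S).ncard + Nat.card F ^ finrank F S = Nat.card F ^ n) :
    S ≤ LinearMap.ker μ := by
  have hpow := Nat.pow_right_injective (Finite.one_lt_card (α := F))
  have hadd := ncard_ker_diff_add S μ
  have hμ : μ ≠ 0 := by
    rintro rfl
    rw [LinearMap.ker_zero, top_inf_eq, finrank_top, hV] at hadd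
    rw [LinearMap.ker_zero] at h
    have := hpow (h.symm.trans hadd)
    omega
  have hker := Module.Dual.finrank_ker_add_one_of_ne_zero hμ
  rw [show finrank F (LinearMap.ker μ) = n by omega, ← h] at hadd
  exact inf_eq_right.mp (Submodule.eq_of_le_of_finrank_eq inf_le_right
    (hpow (Nat.add_left_cancel hadd)))

theorem sum_ncard_ker_diff {P : Type*} [AddCommGroup P] [Module F P]
    [Fintype {y : P // y ≠ 0}] {p : ℕ} (hP : finrank F P = p + 1) {φ : P → Dual F V}
    (hφ : ∀ c ∉ S, ∃ l : Dual F P, l ≠ 0 ∧ ∀ y, φ y c = 0 ↔ l y = 0) :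
    ∑ y : {y : P // y ≠ 0}, ((LinearMap.ker (φ y) : Set V) \ S).ncard =
      (Nat.card V - Nat.card F ^ finrank F S) * (Nat.card F ^ p - 1) := by
  have := Module.finite_of_finite F (M := V)
  have := Fintype.ofFinite ↑(S : Set V)ᶜ
  have hrow (c : ↑(S : Set V)ᶜ) :
      {y : {y : P // y ≠ 0} | φ y c = 0}.ncard = Nat.card F ^ p - 1 := by
    have : FiniteDimensional F P := FiniteDimensional.of_finrank_pos (by omega)
    have := Module.finite_of_finite F (M := P)
    obtain ⟨l, hl, hlφ⟩ := hφ c c.2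
    have hker := Module.Dual.finrank_ker_add_one_of_ne_zero hl
    have himage : Subtype.val '' {y : {y : P // y ≠ 0} | φ y c = 0} =
        (LinearMap.ker l : Set P) \ {0} := by
      ext y
      simp [hlφ, and_comm]
    rw [← Set.ncard_image_of_injective _ Subtype.val_injective, himage,
      Set.ncard_sdiff_singleton_of_mem (Submodule.zero_mem _), ncard_submodule,
      show finrank F (LinearMap.ker l) = p by omega]
  have hcol (y : P) : ((LinearMap.ker (φ y) : Set V) \ S).ncard =
      {c : ↑(S : Set V)ᶜ | φ y c = 0}.ncard := by
    rw [← Set.ncard_image_of_injective _ Subtype.val_injective]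
    congr 1
    ext c
    simp [and_comm]
  simp only [hcol]
  rw [sum_ncard_comm, Finset.sum_congr rfl fun c _ => hrow c, Finset.sum_const, smul_eq_mul,
    Finset.card_univ, ← Nat.card_eq_fintype_card, Nat.card_coe_set_eq, Set.ncard_compl,
    ncard_submodule]

theorem le_ker_of_forall_exists_dual {P : Type*} [AddCommGroup P] [Module F P]
    [Nontrivial P] [Module.Finite F P] (hdim : finrank F P + finrank F S = finrank F V)
    {φ : P → Dual F V} (hφ : ∀ c ∉ S, ∃ l : Dual F P, l ≠ 0 ∧ ∀ y, φ y c = 0 ↔ l y = 0)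
    {y : P} (hy : y ≠ 0) : S ≤ LinearMap.ker (φ y) := by
  have := Module.finite_of_finite F (M := P)
  have := Fintype.ofFinite {y : P // y ≠ 0}
  obtain ⟨p, hp⟩ := Nat.exists_eq_succ_of_ne_zero (finrank_pos (R := F) (M := P)).ne'
  have hV : finrank F V = p + finrank F S + 1 := by omega
  have hcard : Fintype.card {y : P // y ≠ 0} = Nat.card F ^ (p + 1) - 1 := by
    have hcompl : Nat.card ↑({0}ᶜ : Set P) = Nat.card F ^ (p + 1) - 1 := by
      rw [Nat.card_coe_set_eq, Set.ncard_compl, Set.ncard_singleton,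
        Module.natCard_eq_pow_finrank (K := F), hp]
    exact Nat.card_eq_fintype_card.symm.trans hcompl
  have hsub (m : ℕ) : Nat.card F ^ (m + finrank F S) - Nat.card F ^ finrank F S =
      (Nat.card F ^ m - 1) * Nat.card F ^ finrank F S := by
    rw [Nat.sub_one_mul, pow_add]
  have hpow : Nat.card F ^ finrank F S ≤ Nat.card F ^ (p + finrank F S) :=
    Nat.pow_le_pow_right Nat.card_pos (Nat.le_add_left _ _)
  have hle (y : {y : P // y ≠ 0}) : Nat.card F ^ (p + finrank F S) - Nat.card F ^ finrank F S ≤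
      ((LinearMap.ker (φ y) : Set V) \ S).ncard :=
    Nat.sub_le_iff_le_add.mpr (pow_le_ncard_ker_diff_add hV S (φ y))
  have hsum : ∑ _y : {y : P // y ≠ 0},
        (Nat.card F ^ (p + finrank F S) - Nat.card F ^ finrank F S) =
      ∑ y : {y : P // y ≠ 0}, ((LinearMap.ker (φ y) : Set V) \ S).ncard := by
    rw [sum_ncard_ker_diff hp hφ, Finset.sum_const, smul_eq_mul, Finset.card_univ, hcard,
      Module.natCard_eq_pow_finrank (K := F) (V := V), hV, add_right_comm p, hsub, hsub]
    ring
  have hyeq := (Finset.sum_eq_sum_iff_of_le fun y _ => hle y).mp hsum ⟨y, hy⟩ (Finset.mem_univ _)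
  exact le_ker_of_ncard_eq hV (by rw [← hyeq, Nat.sub_add_cancel hpow])

end TangentHyperplanes

section TwoIntersectionNumbers

open Finset

variable {F E : Type*} [Field F] [AddCommGroup E] [Module F E] [Module.Finite F E]
  {A : Finset E} {n : ℕ}

theorem ncard_setOf_dual_vanishing_mul (s : Set E) :
    {l : Dual F E | s ⊆ LinearMap.ker l}.ncard * Nat.card F ^ finrank F (Submodule.span F s) =
      Nat.card F ^ finrank F E := by
  rw [← Submodule.coe_dualAnnihilator_span, ncard_submodule, ← pow_add, add_comm,
    Subspace.finrank_add_finrank_dualAnnihilator_eq]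

variable [Finite F] [DecidableEq F]

section Moments

variable [Fintype (Dual F E)]

theorem card_dual_eq_zero (hE : finrank F E = n + 1) {v : E} (hv : v ≠ 0) :
    #{l : Dual F E | l v = 0} = Nat.card F ^ n := by
  have h := ncard_setOf_dual_vanishing_mul (F := F) {v}
  simp only [Set.singleton_subset_iff, SetLike.mem_coe, LinearMap.mem_ker] at h
  rw [finrank_span_singleton hv, hE, pow_one, pow_succ] at h
  rw [← Nat.eq_of_mul_eq_mul_right Nat.card_pos h, ← Set.ncard_coe_finset, coe_filter_univ]

theorem card_dual_eq_zero_and (hE : finrank F E = n + 2) {v w : E}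
    (hvw : LinearIndependent F ![v, w]) :
    #{l : Dual F E | l v = 0 ∧ l w = 0} = Nat.card F ^ n := by
  have hspan := finrank_span_eq_card hvw
  have h := ncard_setOf_dual_vanishing_mul (F := F) (Set.range ![v, w])
  rw [hspan, hE, Fintype.card_fin, pow_add] at h
  rw [← Nat.eq_of_mul_eq_mul_right (pow_pos Nat.card_pos 2) h, ← Set.ncard_coe_finset,
    coe_filter_univ]
  simp only [Set.range_subset_iff, Fin.forall_fin_two, Matrix.cons_val_zero, Matrix.cons_val_one,
    SetLike.mem_coe, LinearMap.mem_ker]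

theorem sum_card_filter_dual_eq_zero [DecidableEq E] (hE : finrank F E = n + 1) (h0 : 0 ∈ A) :
    ∑ l : Dual F E, #{v ∈ A | l v = 0} = Nat.card F ^ n * (#(A.erase 0) + Nat.card F) := by
  have hzero : #{l : Dual F E | l 0 = 0} = Nat.card F ^ (n + 1) := by
    simp only [map_zero, filter_true, card_univ, ← Nat.card_eq_fintype_card]
    rw [Module.natCard_eq_pow_finrank (K := F), Subspace.dual_finrank_eq, hE]
  calc ∑ l : Dual F E, #{v ∈ A | l v = 0} = ∑ v ∈ A, #{l : Dual F E | l v = 0} :=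
        sum_card_bipartiteAbove_eq_sum_card_bipartiteBelow _
    _ = Nat.card F ^ (n + 1) + ∑ _v ∈ A.erase 0, Nat.card F ^ n := by
        rw [← add_sum_erase _ _ h0, hzero]
        exact congrArg _ (sum_congr rfl fun v hv => card_dual_eq_zero hE (ne_of_mem_erase hv))
    _ = _ := by
        rw [sum_const, smul_eq_mul]
        ring

theorem sum_card_filter_dual_eq_zero_of_ne_zero (hE : finrank F E = n + 2)
    (hA : ∀ v ∈ A, ∀ c : F, c • v ∈ A) {v : E} (hv : v ∈ A) (hv0 : v ≠ 0) :
    ∑ l : Dual F E with l v = 0, #{w ∈ A | l w = 0} + Nat.card F ^ (n + 1) =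
      Nat.card F ^ n * (#A + Nat.card F ^ 2) := by
  classical
  have hspan : #{w ∈ A | w ∈ Submodule.span F {v}} = Nat.card F := by
    rw [← Set.ncard_coe_finset, coe_filter, ← pow_one (Nat.card F),
      ← finrank_span_singleton (K := F) hv0, ← ncard_submodule]
    congr 1
    ext w
    refine ⟨And.right, fun hw => ⟨?_, hw⟩⟩
    obtain ⟨c, rfl⟩ := Submodule.mem_span_singleton.mp hw
    exact hA v hv c
  have hmem (w) (hw : w ∈ A.filter (· ∈ Submodule.span F {v})) :
      #{l : Dual F E | l v = 0 ∧ l w = 0} = Nat.card F ^ (n + 1) := by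
    obtain ⟨c, rfl⟩ := Submodule.mem_span_singleton.mp (mem_filter.mp hw).2
    rw [← card_dual_eq_zero hE hv0]
    congr! 2 with l
    simp +contextual
  have hnotMem (w) (hw : w ∈ A.filter (· ∉ Submodule.span F {v})) :
      #{l : Dual F E | l v = 0 ∧ l w = 0} = Nat.card F ^ n := by
    refine card_dual_eq_zero_and hE ((LinearIndependent.pair_iff' hv0).mpr fun c hc => ?_)
    exact (mem_filter.mp hw).2 (hc ▸ Submodule.smul_mem _ c (Submodule.mem_span_singleton_self v))
  have hswap : ∑ l : Dual F E with l v = 0, #{w ∈ A | l w = 0} =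
      ∑ w ∈ A, #{l : Dual F E | l v = 0 ∧ l w = 0} := by
    simp only [← filter_filter]
    exact sum_card_bipartiteAbove_eq_sum_card_bipartiteBelow _
  rw [hswap, ← sum_filter_add_sum_filter_not A (· ∈ Submodule.span F {v}), sum_congr rfl hmem,
    sum_congr rfl hnotMem, sum_const, sum_const, smul_eq_mul, smul_eq_mul,
    ← card_filter_add_card_filter_not (s := A) (· ∈ Submodule.span F {v}), hspan]
  ring

theorem sum_sq_card_filter_dual_eq_zero [DecidableEq E] (hE : finrank F E = n + 2) (h0 : 0 ∈ A)
    (hA : ∀ v ∈ A, ∀ c : F, c • v ∈ A) :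
    ∑ l : Dual F E, #{v ∈ A | l v = 0} ^ 2 + #(A.erase 0) * Nat.card F ^ (n + 1) =
      Nat.card F ^ (n + 1) * (#(A.erase 0) + Nat.card F) +
        #(A.erase 0) * (Nat.card F ^ n * (#A + Nat.card F ^ 2)) := by
  have hswap : ∑ l : Dual F E, #{v ∈ A | l v = 0} ^ 2 =
      ∑ v ∈ A, ∑ l : Dual F E with l v = 0, #{w ∈ A | l w = 0} := by
    simp only [sq, ← smul_eq_mul, ← sum_const]
    exact sum_comm' (by simp [and_comm])
  rw [hswap, ← add_sum_erase _ _ h0, add_assoc, ← smul_eq_mul #(A.erase 0), ← sum_const,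
    ← sum_add_distrib, sum_congr rfl fun v hv =>
      sum_card_filter_dual_eq_zero_of_ne_zero hE hA (mem_of_mem_erase hv) (ne_of_mem_erase hv),
    sum_const, smul_eq_mul]
  simp only [map_zero, filter_true]
  rw [sum_card_filter_dual_eq_zero hE h0]

end Moments

theorem card_filter_dual_eq_zero_eq_or {q : ℕ} (hF : Nat.card F = q ^ 2) (hE : finrank F E = 3)
    (h0 : 0 ∈ A) (hA : ∀ v ∈ A, ∀ c : F, c • v ∈ A) (hcard : #A + q ^ 3 = q ^ 2 + q ^ 5)
    (hle : ∀ l : Dual F E, l ≠ 0 →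
      q ^ 2 ≤ #{v ∈ A | l v = 0} ∧ #{v ∈ A | l v = 0} + q ≤ q ^ 3 + q ^ 2)
    {l : Dual F E} (hl : l ≠ 0) :
    #{v ∈ A | l v = 0} = q ^ 2 ∨ #{v ∈ A | l v = 0} + q = q ^ 3 + q ^ 2 := by
  classical
  have := Module.finite_of_finite F (M := Dual F E)
  have := Fintype.ofFinite (Dual F E)
  set z : Dual F E → ℤ := fun l => #{v ∈ A | l v = 0} with hz
  have hfirst := sum_card_filter_dual_eq_zero hE h0
  have hsecond := sum_sq_card_filter_dual_eq_zero hE h0 hA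
  have herase := card_erase_add_one h0
  have hdual : Fintype.card (Dual F E) = q ^ 6 := by
    rw [← Nat.card_eq_fintype_card, Module.natCard_eq_pow_finrank (K := F),
      Subspace.dual_finrank_eq, hE, hF, ← pow_mul]
  have hz0 : z 0 = #A := by simp [hz]
  zify [hF] at hfirst hsecond herase hcard hle hdual
  have hsum : ∑ l, (z l - q ^ 2) * (q ^ 3 + q ^ 2 - q - z l) =
      (z 0 - q ^ 2) * (q ^ 3 + q ^ 2 - q - z 0) := by
    have hexpand (l) : (z l - q ^ 2) * (q ^ 3 + q ^ 2 - q - z l) =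
        (q ^ 3 + 2 * q ^ 2 - q) * z l - z l ^ 2 - q ^ 2 * (q ^ 3 + q ^ 2 - q) := by ring
    simp only [hexpand, sum_sub_distrib, ← mul_sum, sum_const, card_univ, nsmul_eq_mul, hdual]
    rw [hz0, hfirst, eq_sub_of_add_eq hsecond, eq_sub_of_add_eq herase, eq_sub_of_add_eq hcard]
    ring
  rw [← add_sum_erase _ _ (mem_univ 0), add_eq_left,
    sum_eq_zero_iff_of_nonneg fun l hl => mul_nonneg
      (by linarith [(hle l (ne_of_mem_erase hl)).1]) (by linarith [(hle l (ne_of_mem_erase hl)).2])]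
    at hsum
  zify
  exact (mul_eq_zero.mp (hsum l (mem_erase.mpr ⟨hl, mem_univ l⟩))).imp
    (fun h => by linarith) (fun h => by linarith)

end TwoIntersectionNumbers

section SubspaceSections

variable {F V : Type*} [Field F] [AddCommGroup V] [Module F V] [Module.Finite F V]
  {Z : Set V} {l C X Y W B L : Submodule F V}

theorem finrank_inf_add_one_of_not_le {H : Submodule F V} (hH : finrank F H + 1 = finrank F V)
    (hX : ¬ X ≤ H) : finrank F ↥(H ⊓ X) + 1 = finrank F X := by
  have hsup := Submodule.finrank_sup_add_finrank_inf_eq H X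
  have hlt := Submodule.finrank_lt_finrank_of_lt (left_lt_sup.mpr hX)
  have hle := Submodule.finrank_le (H ⊔ X)
  omega

theorem finrank_add_finrank_inf_of_isCompl (hC : IsCompl l C) (hlX : l ≤ X) :
    finrank F l + finrank F ↥(X ⊓ C) = finrank F X := by
  have h := Submodule.finrank_sup_add_finrank_inf_eq l (X ⊓ C)
  rw [inf_comm X C, ← sup_inf_assoc_of_le C hlX, hC.sup_eq_top, top_inf_eq, ← inf_assoc,
    hC.inf_eq_bot, bot_inf_eq, finrank_bot, inf_comm C X] at h
  omega

theorem ncard_inter_eq_mul_of_isCompl (hC : IsCompl l C) (hlX : l ≤ X)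
    (hZ : ∀ v ∈ X, ∀ w ∈ l, v + w ∈ Z ↔ v ∈ Z) :
    (↑X ∩ Z).ncard = Nat.card F ^ finrank F l * (↑(X ⊓ C) ∩ Z).ncard := by
  have hinj : Set.InjOn (fun p : V × V => p.1 + p.2) ((l : Set V) ×ˢ (↑(X ⊓ C) ∩ Z)) := by
    intro p hp p' hp' h
    have := (Submodule.prodEquivOfIsCompl l C hC).injective
      (a₁ := (⟨p.1, hp.1⟩, ⟨p.2, hp.2.1.2⟩)) (a₂ := (⟨p'.1, hp'.1⟩, ⟨p'.2, hp'.2.1.2⟩)) h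
    simpa [Prod.ext_iff] using this
  rw [← ncard_submodule, ← Set.ncard_prod, ← hinj.ncard_image]
  congr 1
  ext v
  constructor
  · rintro ⟨hvX, hvZ⟩
    obtain ⟨a, ha, b, hb, rfl⟩ := Submodule.mem_sup.mp (hC.sup_eq_top ▸ Submodule.mem_top (x := v))
    have hbX : b ∈ X := (X.add_mem_iff_right (hlX ha)).mp hvX
    exact ⟨(a, b), ⟨ha, ⟨hbX, hb⟩, (hZ b hbX a ha).mp (add_comm a b ▸ hvZ)⟩, rfl⟩
  · rintro ⟨⟨a, b⟩, ⟨ha, ⟨hbX, -⟩, hbZ⟩, rfl⟩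
    have hbaZ := (hZ b hbX a ha).mpr hbZ
    exact ⟨X.add_mem (hlX ha) hbX, by rwa [add_comm] at hbaZ⟩

variable [Finite F]

theorem card_mul_ncard_inter_add (hWX : W ≤ X) (hWY : W ≤ Y) {k : ℕ}
    (h : ∀ v ∈ X, v ∉ Y → {w : W | v + w ∈ Z}.ncard = k) :
    Nat.card W * (↑X ∩ Z).ncard + k * Nat.card F ^ finrank F ↥(X ⊓ Y) =
      Nat.card W * (↑(X ⊓ Y) ∩ Z).ncard + k * Nat.card F ^ finrank F X := by
  have := Module.finite_of_finite F (M := V)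
  have hcount := card_mul_ncard_inter_eq (σ := fun (w : W) v => v + (w : V)) (A := ↑X \ ↑Y) (Z := Z)
    (fun w => bijOn_add_right fun v => and_congr (X.add_mem_iff_left (hWX w.2))
      (not_congr (Y.add_mem_iff_left (hWY w.2)))) fun v hv => h v hv.1 hv.2
  have hX := Set.ncard_inter_add_ncard_sdiff_eq_ncard (X : Set V) Y
  have hZ := Set.ncard_inter_add_ncard_sdiff_eq_ncard (↑X ∩ Z) Y
  rw [← ncard_submodule, ← ncard_submodule, Submodule.coe_inf, ← hX, ← hZ, mul_add,
    Set.inter_sdiff_right_comm, hcount, Set.inter_right_comm]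
  ring

theorem ncard_inter_eq_or_of_forall_le {q : ℕ} (hF : Nat.card F = q ^ 2) (hB : finrank F B = 3)
    (h0 : 0 ∈ Z) (hZ : ∀ v ∈ Z, ∀ c : F, c • v ∈ Z)
    (hcard : (↑B ∩ Z).ncard + q ^ 3 = q ^ 2 + q ^ 5)
    (hle : ∀ L ≤ B, finrank F L = 2 →
      q ^ 2 ≤ (↑L ∩ Z).ncard ∧ (↑L ∩ Z).ncard + q ≤ q ^ 3 + q ^ 2)
    (hLB : L ≤ B) (hL : finrank F L = 2) :
    (↑L ∩ Z).ncard = q ^ 2 ∨ (↑L ∩ Z).ncard + q = q ^ 3 + q ^ 2 := by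
  classical
  have := Module.finite_of_finite F (M := V)
  have := Fintype.ofFinite B
  let A : Finset B := {v | (v : V) ∈ Z}
  have hA : A.card = (↑B ∩ Z).ncard := by
    rw [← Set.ncard_coe_finset, ← Set.ncard_image_of_injective _ Subtype.val_injective]
    congr 1
    ext v
    simp [A, and_comm]
  have hsection (μ : Dual F B) : (A.filter (μ · = 0)).card =
      (↑((LinearMap.ker μ).map B.subtype) ∩ Z).ncard := by
    rw [← Set.ncard_coe_finset, ← Set.ncard_image_of_injective _ Subtype.val_injective]
    congr 1
    ext v
    simp [A, and_comm]
  have hker {μ : Dual F B} (hμ : μ ≠ 0) : finrank F ((LinearMap.ker μ).map B.subtype) = 2 := by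
    have := Module.Dual.finrank_ker_add_one_of_ne_zero hμ
    rw [Submodule.finrank_map_subtype_eq]
    omega
  obtain ⟨μ, hμ, hLμ⟩ : ∃ μ : Dual F B, μ ≠ 0 ∧ L = (LinearMap.ker μ).map B.subtype := by
    have hlt : L.comap B.subtype < ⊤ := by
      refine lt_top_iff_ne_top.mpr fun htop => ?_
      have := Submodule.finrank_mono (Submodule.comap_subtype_eq_top.mp htop)
      omega
    obtain ⟨μ, hμ, hle⟩ := Submodule.exists_le_ker_of_lt_top _ hlt
    refine ⟨μ, hμ, Submodule.eq_of_le_of_finrank_eq ?_ (hL.trans (hker hμ).symm)⟩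
    rw [← inf_eq_right.mpr hLB, ← Submodule.map_comap_subtype]
    exact Submodule.map_mono hle
  rw [hLμ, ← hsection]
  exact card_filter_dual_eq_zero_eq_or hF hB (by simpa [A] using h0)
    (fun v hv c => by simpa [A] using hZ v (by simpa [A] using hv) c) (by rwa [hA])
    (fun μ hμ => by simpa only [hsection] using hle _ (Submodule.map_subtype_le _ _) (hker hμ)) hμ

end SubspaceSections

section LineSections

variable {F : Type*} [Field F] {n d : ℕ} {f : MvPolynomial (Fin n) F}
  {L : Submodule F (Fin n → F)}

theorem span_singleton_inter_zeroSet_subset (hf : f.IsHomogeneous d) {u : Fin n → F}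
    (hu : u ∉ zeroSet f) : ↑(Submodule.span F {u}) ∩ zeroSet f ⊆ {0} := by
  rintro _ ⟨hv, hvZ⟩
  obtain ⟨c, rfl⟩ := Submodule.mem_span_singleton.mp hv
  by_contra hc
  exact hu ((smul_mem_zeroSet_iff hf fun h0 => hc (by simp [h0])).mp hvZ)

variable [Finite F]

theorem IsLineBlocking.card_le_ncard_inter (hb : IsLineBlocking f) (hf : f.IsHomogeneous d)
    (hL : finrank F L = 2) : Nat.card F ≤ (↑L ∩ zeroSet f).ncard := by
  obtain ⟨v, hvL, hv0, hvZ⟩ := hb L hL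
  rw [← pow_one (Nat.card F), ← finrank_span_singleton (K := F) hv0, ← ncard_submodule]
  refine Set.ncard_le_ncard fun w hw => ?_
  obtain ⟨c, rfl⟩ := Submodule.mem_span_singleton.mp hw
  exact ⟨L.smul_mem c hvL, smul_mem_zeroSet hf c hvZ⟩

theorem ncard_inter_zeroSet_le_of_finrank_eq_two (hf : f.IsHomogeneous (d + 1))
    (hL : finrank F L = 2) (hLZ : ¬ ↑L ⊆ zeroSet f) :
    (↑L ∩ zeroSet f).ncard ≤ (Nat.card F - 1) * (d + 1) + 1 := by
  obtain ⟨u, huL, hu⟩ := Set.not_subset.mp hLZ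
  have hu0 : u ≠ 0 := fun h => hu (h ▸ zero_mem_zeroSet hf)
  set P := Submodule.span F {u} with hP
  have hPL : P ≤ L := (Submodule.span_singleton_le_iff_mem u L).mpr huL
  have hdiff : ((L : Set (Fin n → F)) \ P).ncard = Nat.card F * (Nat.card F - 1) := by
    rw [Set.ncard_sdiff hPL, ncard_submodule, ncard_submodule, hL, hP, finrank_span_singleton hu0,
      sq, pow_one, Nat.mul_sub_one]
  have hle := card_mul_ncard_inter_le (σ := fun (t : F) v => v + t • u) (A := ↑L \ ↑P)
    (Z := zeroSet f)
    (fun t => bijOn_add_right fun v => and_congr (L.add_mem_iff_left (L.smul_mem t huL))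
      (not_congr (P.add_mem_iff_left (P.smul_mem t (Submodule.mem_span_singleton_self u)))))
    fun v _ => ncard_zeros_line_le (natDegree_restrictLine_le_of_isHomogeneous hf v u) fun h0 =>
      hu (by rw [zeroSet, Set.mem_ofPred_eq, ← coeff_restrictLine_self hf v u, h0,
        Polynomial.coeff_zero])
  rw [hdiff, mul_assoc] at hle
  calc (↑L ∩ zeroSet f).ncard = ((↑L \ ↑P) ∩ zeroSet f).ncard + (↑P ∩ zeroSet f).ncard := by
        rw [← Set.ncard_inter_add_ncard_sdiff_eq_ncard (↑L ∩ zeroSet f) P, add_comm,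
          Set.inter_sdiff_right_comm, Set.inter_right_comm, Set.inter_eq_right.mpr hPL]
    _ ≤ _ := Nat.add_le_add (Nat.le_of_mul_le_mul_left hle Nat.card_pos)
        ((Set.ncard_le_ncard (span_singleton_inter_zeroSet_subset hf hu)).trans_eq
          (Set.ncard_singleton 0))

end LineSections

section PolarOrthogonal

variable {F V : Type*} [Field F] [AddCommGroup V] [Module F V] [Module.Finite F V]

theorem finrank_le_finrank_inf_ker_add_one (W : Submodule F V) (μ : Dual F V) :
    finrank F W ≤ finrank F ↥(LinearMap.ker μ ⊓ W) + 1 := by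
  by_cases hW : W ≤ LinearMap.ker μ
  · rw [inf_eq_right.mpr hW]
    exact Nat.le_succ _
  · have hμ : μ ≠ 0 := fun h => hW (by simp [h])
    exact (finrank_inf_add_one_of_not_le (Module.Dual.finrank_ker_add_one_of_ne_zero hμ) hW).ge

variable {n d : ℕ} {f : MvPolynomial (Fin n) F} {l : Submodule F (Fin n → F)} {c : Fin n → F}

theorem polarForm_zero (hf : f.IsHomogeneous (d + 1)) (hd : d ≠ 0) : polarForm hf 0 = 0 :=
  LinearMap.ext fun v => by
    rw [polarForm_apply, restrictLine_zero_right, Polynomial.coeff_C_of_ne_zero hd,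
      LinearMap.zero_apply]

/-- The subspace of vectors annihilated by the polar forms of all points of `l`; for a Hermitian
form this is the orthogonal complement of `l`. -/
noncomputable def polarOrthogonal (hf : f.IsHomogeneous (d + 1)) (l : Submodule F (Fin n → F)) :
    Submodule F (Fin n → F) :=
  ⨅ y : l, LinearMap.ker (polarForm hf y)

theorem mem_polarOrthogonal (hf : f.IsHomogeneous (d + 1)) :
    c ∈ polarOrthogonal hf l ↔ ∀ y : l, polarForm hf y c = 0 := by
  simp only [polarOrthogonal, Submodule.mem_iInf, LinearMap.mem_ker]

end PolarOrthogonal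

namespace IsPlaneSection

variable {F : Type*} [Field F] {q : ℕ} {f : MvPolynomial (Fin 7) F}
  {π S l H X : Submodule F (Fin 7 → F)} {c : Fin 7 → F}

theorem mem_zeroSet_iff (h : IsPlaneSection q f π S) (hc : c ∈ S) : c ∈ zeroSet f ↔ c ∈ π := by
  rw [← SetLike.mem_coe (p := π), h.plane_eq]
  exact (and_iff_right hc).symm

theorem exists_dual (h : IsPlaneSection q f π S) (hc : c ∉ S) :
    ∃ (μ : Dual F π) (K : Set F), μ ≠ 0 ∧ K.ncard = q ∧ (∀ x : π, c + x ∈ zeroSet f ↔ μ x ∈ K) ∧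
      ∀ y : π, polarForm h.isHomogeneous y c = 0 ↔ μ y = 0 := by
  have := h.finite
  obtain ⟨μ, K, hμ, hKq, hK⟩ := exists_dual_mem_iff h.card_field h.three_le h.isHomogeneous
    h.plane_subset h.finrank_plane (h.ncard_coset_eq hc)
  exact ⟨μ, K, hμ, hKq, hK, polarForm_eq_zero_iff h.card_field (by have := h.three_le; omega)
    h.isHomogeneous h.plane_subset hμ hKq hK⟩

theorem solid_le_ker_polarForm (h : IsPlaneSection q f π S) {y : Fin 7 → F} (hy : y ∈ π) :
    S ≤ LinearMap.ker (polarForm h.isHomogeneous y) := by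
  have := h.finite
  have := h.three_le
  rcases eq_or_ne y 0 with rfl | hy0
  · simp [polarForm_zero h.isHomogeneous (by omega : q ≠ 0)]
  have hy0' : (⟨y, hy⟩ : π) ≠ 0 := fun h0 => hy0 (congrArg Subtype.val h0)
  have : Nontrivial π := ⟨_, _, hy0'⟩
  refine le_ker_of_forall_exists_dual (φ := fun y : π => polarForm h.isHomogeneous y)
    (y := ⟨y, hy⟩) ?_ (fun c hc => ?_) hy0'
  · rw [h.finrank_plane, h.finrank_solid, finrank_fin_fun]
  · obtain ⟨μ, -, hμ, -, -, hpol⟩ := h.exists_dual hc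
    exact ⟨μ, hμ, hpol⟩

theorem solid_le_polarOrthogonal (h : IsPlaneSection q f π S) (hl : l ≤ π) :
    S ≤ polarOrthogonal h.isHomogeneous l :=
  fun _ hc => (mem_polarOrthogonal _).mpr fun y => h.solid_le_ker_polarForm (hl y.2) hc

theorem mem_polarOrthogonal_iff (h : IsPlaneSection q f π S) (hl : l ≤ π) {ι : Type*}
    (b : Basis ι F l) : c ∈ polarOrthogonal h.isHomogeneous l ↔
      ∀ i, polarForm h.isHomogeneous (b i) c = 0 := by
  rw [mem_polarOrthogonal]
  refine ⟨fun hc i => hc (b i), fun hc y => ?_⟩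
  by_cases hcS : c ∈ S
  · exact h.solid_le_ker_polarForm (hl y.2) hcS
  · obtain ⟨μ, -, -, -, -, hpol⟩ := h.exists_dual hcS
    have hμ : μ ∘ₗ Submodule.inclusion hl = 0 :=
      b.ext fun i => (hpol (Submodule.inclusion hl (b i))).mp (hc i)
    exact (hpol (Submodule.inclusion hl y)).mpr (LinearMap.congr_fun hμ y)

theorem finrank_polarOrthogonal_le (h : IsPlaneSection q f π S) (hl : l ≤ π)
    (hl2 : finrank F l = 2) : finrank F (polarOrthogonal h.isHomogeneous l) ≤ 5 := by
  set U := polarOrthogonal h.isHomogeneous l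
  obtain ⟨x, hxπ, hxl⟩ : ∃ x ∈ π, x ∉ l := SetLike.not_le_iff_exists.mp fun hle => by
    have := Submodule.finrank_mono hle
    rw [h.finrank_plane] at this
    omega
  by_contra! hcon
  have hle := finrank_le_finrank_inf_ker_add_one U (polarForm h.isHomogeneous x)
  have hUS : ¬ LinearMap.ker (polarForm h.isHomogeneous x) ⊓ U ≤ S := fun hle' => by
    have := Submodule.finrank_mono hle'
    rw [h.finrank_solid] at this
    omega
  obtain ⟨c, ⟨hcx, hcU⟩, hcS⟩ := SetLike.not_le_iff_exists.mp hUS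
  obtain ⟨μ, -, hμ, -, -, hpol⟩ := h.exists_dual hcS
  have hker : l.comap π.subtype = LinearMap.ker μ := by
    refine Submodule.eq_of_le_of_finrank_eq
      (fun y hy => (hpol y).mp ((mem_polarOrthogonal _).mp hcU ⟨y, hy⟩)) ?_
    have := Module.Dual.finrank_ker_add_one_of_ne_zero hμ
    rw [h.finrank_plane] at this
    rw [(Submodule.comapSubtypeEquivOfLe hl).finrank_eq]
    omega
  have hx : (⟨x, hxπ⟩ : π) ∈ l.comap π.subtype := hker ▸ (hpol ⟨x, hxπ⟩).mp hcx
  exact hxl hx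

theorem finrank_polarOrthogonal (h : IsPlaneSection q f π S) (hl : l ≤ π)
    (hl2 : finrank F l = 2) : finrank F (polarOrthogonal h.isHomogeneous l) = 5 := by
  refine (h.finrank_polarOrthogonal_le hl hl2).antisymm ?_
  let b := finBasisOfFinrankEq F l hl2
  have hker : LinearMap.ker (polarForm h.isHomogeneous (b 0)) ⊓
      (LinearMap.ker (polarForm h.isHomogeneous (b 1)) ⊓ ⊤) ≤
      polarOrthogonal h.isHomogeneous l := fun c hc => by
    rw [h.mem_polarOrthogonal_iff hl b, Fin.forall_fin_two]
    exact ⟨hc.1, hc.2.1⟩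
  have h7 := finrank_le_finrank_inf_ker_add_one ⊤ (polarForm h.isHomogeneous (b 1))
  have h6 := finrank_le_finrank_inf_ker_add_one
    (LinearMap.ker (polarForm h.isHomogeneous (b 1)) ⊓ ⊤) (polarForm h.isHomogeneous (b 0))
  have h5 := Submodule.finrank_mono hker
  rw [finrank_top, finrank_fin_fun] at h7
  omega

theorem add_mem_zeroSet_iff (h : IsPlaneSection q f π S) (hl : l ≤ π)
    (hc : c ∈ polarOrthogonal h.isHomogeneous l) {x : Fin 7 → F} (hx : x ∈ l) :
    c + x ∈ zeroSet f ↔ c ∈ zeroSet f := by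
  by_cases hcS : c ∈ S
  · rw [h.mem_zeroSet_iff (S.add_mem hcS (h.plane_le (hl hx))), h.mem_zeroSet_iff hcS,
      π.add_mem_iff_left (hl hx)]
  · obtain ⟨μ, K, -, -, hK, hpol⟩ := h.exists_dual hcS
    have hμx := (hpol ⟨x, hl hx⟩).mp ((mem_polarOrthogonal _).mp hc ⟨x, hx⟩)
    have h0 := hK 0
    have hx := hK ⟨x, hl hx⟩
    rw [hμx, ← map_zero μ] at hx
    simpa using hx.trans h0.symm

theorem ncard_inter_of_plane_le (h : IsPlaneSection q f π S) (hX : π ≤ X) :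
    q ^ 6 * (↑X ∩ zeroSet f).ncard + q ^ 5 * (q ^ 2) ^ finrank F ↥(X ⊓ S) =
      q ^ 12 + q ^ 5 * (q ^ 2) ^ finrank F X := by
  have := h.finite
  have hXS : (↑(X ⊓ S) ∩ zeroSet f : Set (Fin 7 → F)) = π := by
    rw [Submodule.coe_inf, Set.inter_assoc, ← h.plane_eq]
    exact Set.inter_eq_right.mpr hX
  have hcount := card_mul_ncard_inter_add (Z := zeroSet f) hX h.plane_le
    fun c _ hcS => h.ncard_coset_eq hcS
  rw [hXS, ncard_submodule, h.finrank_plane, h.natCard_plane, h.card_field] at hcount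
  rw [hcount]
  ring

theorem ncard_hyperplane_of_plane_le (h : IsPlaneSection q f π S) (hH : finrank F H = 6)
    (hπH : π ≤ H) : (↑H ∩ zeroSet f).ncard + q ^ 7 = q ^ 11 + q ^ 6 ∨
      (↑H ∩ zeroSet f).ncard + q ^ 5 = q ^ 11 + q ^ 6 := by
  have hq := h.three_le
  have hcount := h.ncard_inter_of_plane_le hπH
  rw [hH] at hcount
  have hpos : 0 < q ^ 6 := by positivity
  by_cases hSH : S ≤ H
  · rw [inf_eq_right.mpr hSH, h.finrank_solid] at hcount
    exact .inl (Nat.eq_of_mul_eq_mul_left hpos (by linear_combination hcount))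
  · have hHS := finrank_inf_add_one_of_not_le (by rw [hH, finrank_fin_fun]) hSH
    rw [h.finrank_solid] at hHS
    rw [Nat.succ_injective hHS] at hcount
    exact .inr (Nat.eq_of_mul_eq_mul_left hpos (by linear_combination hcount))

theorem ncard_line_coset_eq (h : IsPlaneSection q f π S) (hl : l ≤ π) (hl2 : finrank F l = 2)
    (hc : c ∉ polarOrthogonal h.isHomogeneous l) : {x : l | c + x ∈ zeroSet f}.ncard = q ^ 3 := by
  have := h.finite
  obtain ⟨μ, K, -, hKq, hK, hpol⟩ := h.exists_dual fun hcS => hc (h.solid_le_polarOrthogonal hl hcS)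
  have hμ : μ ∘ₗ Submodule.inclusion hl ≠ 0 := fun h0 => hc <| (mem_polarOrthogonal _).mpr fun y =>
    (hpol (Submodule.inclusion hl y)).mpr (LinearMap.congr_fun h0 y)
  have hpre : {x : l | c + x ∈ zeroSet f} = (μ ∘ₗ Submodule.inclusion hl) ⁻¹' K :=
    Set.ext fun x => hK (Submodule.inclusion hl x)
  have hcount := card_mul_ncard_preimage_dual hμ K
  rw [← hpre, hKq, natCard_eq_pow_finrank (K := F) (V := l), hl2, h.card_field] at hcount
  have := h.three_le
  exact Nat.eq_of_mul_eq_mul_left (by positivity : 0 < q ^ 2) (hcount.trans (by ring))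

end IsPlaneSection

namespace IsPlaneSection

variable {F : Type*} [Field F] {q : ℕ} {f : MvPolynomial (Fin 7) F}
  {π S l C H L : Submodule F (Fin 7 → F)}

theorem ncard_polarOrthogonal_inter (h : IsPlaneSection q f π S) (hl : l ≤ π)
    (hl2 : finrank F l = 2) :
    (↑(polarOrthogonal h.isHomogeneous l) ∩ zeroSet f).ncard + q ^ 7 = q ^ 6 + q ^ 9 := by
  have hSU := h.solid_le_polarOrthogonal hl
  have hcount := h.ncard_inter_of_plane_le (h.plane_le.trans hSU)
  rw [inf_eq_right.mpr hSU, h.finrank_solid, h.finrank_polarOrthogonal hl hl2] at hcount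
  have := h.three_le
  exact Nat.eq_of_mul_eq_mul_left (by positivity : 0 < q ^ 6) (by linear_combination hcount)

theorem ncard_inter_eq_mul (h : IsPlaneSection q f π S) (hl : l ≤ π) (hl2 : finrank F l = 2)
    (hC : IsCompl l C) {X : Submodule F (Fin 7 → F)} (hlX : l ≤ X)
    (hX : X ≤ polarOrthogonal h.isHomogeneous l) :
    (↑X ∩ zeroSet f).ncard = q ^ 4 * (↑(X ⊓ C) ∩ zeroSet f).ncard := by
  have := h.finite
  rw [ncard_inter_eq_mul_of_isCompl hC hlX fun c hc x hx => h.add_mem_zeroSet_iff hl (hX hc) hx,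
    hl2, h.card_field, ← pow_mul]

theorem not_subset_zeroSet_of_le_polarOrthogonal (h : IsPlaneSection q f π S) (hl : l ≤ π)
    (hl2 : finrank F l = 2) (hL : L ≤ polarOrthogonal h.isHomogeneous l) (hL2 : finrank F L = 2)
    (hlL : Disjoint l L) : ¬ ↑L ⊆ zeroSet f := by
  intro hLZ
  refine h.not_subset (L ⊔ l) ?_ fun v hv => ?_
  · have hsup := Submodule.finrank_sup_add_finrank_inf_eq L l
    rwa [hlL.symm.eq_bot, finrank_bot, hL2, hl2] at hsup
  · obtain ⟨c, hc, x, hx, rfl⟩ := Submodule.mem_sup.mp hv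
    exact (h.add_mem_zeroSet_iff hl (hL hc) hx).mpr (hLZ hc)

theorem ncard_line_inter_bounds (h : IsPlaneSection q f π S) (hb : IsLineBlocking f) (hl : l ≤ π)
    (hl2 : finrank F l = 2) (hL : L ≤ polarOrthogonal h.isHomogeneous l) (hL2 : finrank F L = 2)
    (hlL : Disjoint l L) :
    q ^ 2 ≤ (↑L ∩ zeroSet f).ncard ∧ (↑L ∩ zeroSet f).ncard + q ≤ q ^ 3 + q ^ 2 := by
  have := h.finite
  have := h.three_le
  refine ⟨h.card_field ▸ hb.card_le_ncard_inter h.isHomogeneous hL2, ?_⟩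
  refine (Nat.add_le_add_right (ncard_inter_zeroSet_le_of_finrank_eq_two h.isHomogeneous hL2
    (h.not_subset_zeroSet_of_le_polarOrthogonal hl hl2 hL hL2 hlL)) q).trans_eq ?_
  rw [h.card_field]
  zify [Nat.one_le_pow 2 q (by omega)]
  ring

theorem ncard_inter_polarOrthogonal_eq_or (h : IsPlaneSection q f π S) (hb : IsLineBlocking f)
    (hl : l ≤ π) (hl2 : finrank F l = 2) {X : Submodule F (Fin 7 → F)} (hlX : l ≤ X)
    (hX : X ≤ polarOrthogonal h.isHomogeneous l) (hX4 : finrank F X = 4) :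
    (↑X ∩ zeroSet f).ncard = q ^ 6 ∨ (↑X ∩ zeroSet f).ncard + q ^ 5 = q ^ 7 + q ^ 6 := by
  have := h.finite
  obtain ⟨C, hC⟩ := l.exists_isCompl
  have hdim {Y : Submodule F (Fin 7 → F)} (hY : l ≤ Y) :
      finrank F ↥(Y ⊓ C) + 2 = finrank F Y := by
    rw [← finrank_add_finrank_inf_of_isCompl hC hY, hl2, add_comm]
  have hlU := (hl.trans h.plane_le).trans (h.solid_le_polarOrthogonal hl)
  have hB := hdim hlU
  have hL := hdim hlX
  rw [h.finrank_polarOrthogonal hl hl2] at hB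
  rw [hX4] at hL
  have hcount := h.ncard_polarOrthogonal_inter hl hl2
  rw [h.ncard_inter_eq_mul hl hl2 hC hlU le_rfl] at hcount
  have := h.three_le
  rw [h.ncard_inter_eq_mul hl hl2 hC hlX hX]
  refine (ncard_inter_eq_or_of_forall_le h.card_field (Nat.add_right_cancel hB)
    (zero_mem_zeroSet h.isHomogeneous) (fun v hv c => smul_mem_zeroSet h.isHomogeneous c hv)
    (Nat.eq_of_mul_eq_mul_left (by positivity : 0 < q ^ 4) (by linear_combination hcount))
    (fun L hL hL2 => h.ncard_line_inter_bounds hb hl hl2 (hL.trans inf_le_left) hL2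
      (hC.disjoint.mono_right (hL.trans inf_le_right)))
    (inf_le_inf_right C hX) (Nat.add_right_cancel hL)).imp (fun h => ?_) fun h => ?_
  · rw [h]
    ring
  · linear_combination q ^ 4 * h

theorem ncard_hyperplane_of_not_plane_le (h : IsPlaneSection q f π S) (hb : IsLineBlocking f)
    (hH : finrank F H = 6) (hπH : ¬ π ≤ H) : (↑H ∩ zeroSet f).ncard + q ^ 7 = q ^ 11 + q ^ 6 ∨
      (↑H ∩ zeroSet f).ncard + q ^ 5 = q ^ 11 + q ^ 6 := by
  have := h.finite
  have hq := h.three_le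
  have hH7 : finrank F H + 1 = finrank F (Fin 7 → F) := by rw [hH, finrank_fin_fun]
  have hl : H ⊓ π ≤ π := inf_le_right
  have hl2 : finrank F ↥(H ⊓ π) = 2 := Nat.succ_injective
    ((finrank_inf_add_one_of_not_le hH7 hπH).trans h.finrank_plane)
  set U := polarOrthogonal h.isHomogeneous (H ⊓ π)
  have hπU : π ≤ U := h.plane_le.trans (h.solid_le_polarOrthogonal hl)
  have hX4 : finrank F ↥(H ⊓ U) = 4 := Nat.succ_injective
    ((finrank_inf_add_one_of_not_le hH7 fun hUH => hπH (hπU.trans hUH)).trans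
      (h.finrank_polarOrthogonal hl hl2))
  have hcount := card_mul_ncard_inter_add (Z := zeroSet f) (inf_le_left : H ⊓ π ≤ H)
    (hl.trans hπU) fun c _ hc => h.ncard_line_coset_eq hl hl2 hc
  rw [natCard_eq_pow_finrank (K := F) (V := ↥(H ⊓ π)), hl2, hX4, hH, h.card_field] at hcount
  refine (h.ncard_inter_polarOrthogonal_eq_or hb hl hl2 (inf_le_inf_left H hπU) inf_le_right
    hX4).imp (fun hcard => ?_) fun hcard => ?_
  all_goals refine Nat.eq_of_mul_eq_mul_left (by positivity : 0 < q ^ 4) ?_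
  · rw [hcard] at hcount
    linear_combination hcount
  · zify at hcard hcount ⊢
    linear_combination hcount + (q : ℤ) ^ 4 * hcard

theorem ncard_hyperplane (h : IsPlaneSection q f π S) (hb : IsLineBlocking f)
    (hH : finrank F H = 6) : (↑H ∩ zeroSet f).ncard + q ^ 7 = q ^ 11 + q ^ 6 ∨
      (↑H ∩ zeroSet f).ncard + q ^ 5 = q ^ 11 + q ^ 6 := by
  by_cases hπH : π ≤ H
  · exact h.ncard_hyperplane_of_plane_le hH hπH
  · exact h.ncard_hyperplane_of_not_plane_le hb hH hπH

end IsPlaneSection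

section RationalPoints

variable {F : Type} [Field F] {n d : ℕ} {f : MvPolynomial (Fin n) F} {W : Submodule F (Fin n → F)}

theorem mem_projPts_iff {P : Projectivization F (Fin n → F)} : P ∈ projPts W ↔ P.rep ∈ W := by
  change P.submodule ≤ W ↔ _
  rw [Projectivization.submodule_eq, Submodule.span_singleton_le_iff_mem]

theorem projPts_top : projPts (⊤ : Submodule F (Fin n → F)) = Set.univ :=
  Set.eq_univ_of_forall fun P => (le_top : P.submodule ≤ ⊤)

theorem projPts_subset_hypersurfacePts (hW : ↑W ⊆ zeroSet f) : projPts W ⊆ hypersurfacePts f :=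
  fun _ hP => hW (mem_projPts_iff.mp hP)

theorem injOn_smul_rep {K V : Type*} [Field K] [AddCommGroup V] [Module K V]
    (A : Set (Projectivization K V)) :
    Set.InjOn (fun p : Projectivization K V × K => p.2 • p.1.rep) (A ×ˢ {0}ᶜ) := by
  rintro ⟨P, a⟩ ⟨-, ha : a ≠ 0⟩ ⟨P', a'⟩ - (h : a • P.rep = a' • P'.rep)
  obtain rfl : P = P' := by
    rw [← P.mk_rep, ← P'.mk_rep, Projectivization.mk_eq_mk_iff']
    exact ⟨a⁻¹ * a', by rw [mul_smul, ← h, inv_smul_smul₀ ha]⟩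
  rw [smul_left_injective K P.rep_nonzero h]

theorem image_smul_rep_eq (hf : f.IsHomogeneous d) :
    (fun p : Projectivization F (Fin n → F) × F => p.2 • p.1.rep) ''
      ((hypersurfacePts f ∩ projPts W) ×ˢ {0}ᶜ) = (↑W ∩ zeroSet f) \ {0} := by
  ext v
  constructor
  · rintro ⟨⟨P, a⟩, ⟨⟨hP, hPW⟩, ha⟩, rfl⟩
    exact ⟨⟨W.smul_mem _ (mem_projPts_iff.mp hPW), smul_mem_zeroSet hf _ hP⟩,
      smul_ne_zero ha P.rep_nonzero⟩
  · rintro ⟨⟨hvW, hvf⟩, hv0⟩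
    obtain ⟨a, ha⟩ := Projectivization.exists_smul_eq_mk_rep F v hv0
    have ha : (a : F) • v = (Projectivization.mk F v hv0).rep := ha
    refine ⟨(Projectivization.mk F v hv0, (a : F)⁻¹), ⟨⟨?_, mem_projPts_iff.mpr ?_⟩, by simp⟩, ?_⟩
    · have := smul_mem_zeroSet hf a hvf
      rwa [ha] at this
    · have := W.smul_mem a hvW
      rwa [ha] at this
    · simp only [← ha, inv_smul_smul₀ a.ne_zero]

theorem ncard_hypersurfacePts_inter_eq_iff [Finite F] (hf : f.IsHomogeneous (d + 1)) {N : ℕ} :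
    (hypersurfacePts f ∩ projPts W).ncard = N ↔
      (↑W ∩ zeroSet f).ncard + N = N * Nat.card F + 1 := by
  have h0 : 0 ∈ ↑W ∩ zeroSet f := ⟨W.zero_mem, zero_mem_zeroSet hf⟩
  have hcard : (↑W ∩ zeroSet f).ncard =
      (hypersurfacePts f ∩ projPts W).ncard * (Nat.card F - 1) + 1 := by
    rw [← Set.ncard_sdiff_singleton_add_one h0, ← image_smul_rep_eq hf,
      (injOn_smul_rep _).ncard_image, Set.ncard_prod, Set.ncard_compl, Set.ncard_singleton]
  obtain ⟨m, hm⟩ := Nat.exists_eq_add_of_lt (Finite.one_lt_card (α := F))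
  rw [hcard, hm, Nat.add_sub_cancel_right]
  constructor
  · rintro rfl
    ring
  · intro h
    exact Nat.eq_of_mul_eq_mul_right (by omega : 0 < 1 + m) (by linear_combination h)

end RationalPoints

section MainTheorem

variable {F : Type} [Field F] [Finite F] {q : ℕ} {f : MvPolynomial (Fin 7) F}

theorem isLineBlocking_of_ncard_zeroSet (hF : Nat.card F = q ^ 2) (hq : 3 ≤ q)
    (hf : f.IsHomogeneous (q + 1)) (hcard : (zeroSet f).ncard + q ^ 7 = q ^ 13 + q ^ 6) :
    IsLineBlocking f := by
  have hqF : (q : F) = 0 := by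
    have := Fintype.ofFinite F
    rw [← pow_eq_zero_iff two_ne_zero, ← Nat.cast_pow, ← hF, Nat.card_eq_fintype_card,
      FiniteField.cast_card_eq_zero]
  refine isLineBlocking_of_lt hF hq hqF hf ?_
  have hlt : q ^ 11 < q ^ 14 + q ^ 10 :=
    (Nat.pow_lt_pow_right (by omega) (by omega)).trans_le (Nat.le_add_right _ _)
  have h1 : 1 ≤ q ^ 3 := Nat.one_le_pow _ _ (by omega)
  zify [h1] at hcard hlt ⊢
  linear_combination hlt - (q : ℤ) ^ 4 * hcard

theorem exists_isPlaneSection (hF : Nat.card F = q ^ 2) (hq : 3 ≤ q) (hf : f.IsHomogeneous (q + 1))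
    (hcard : (zeroSet f).ncard + q ^ 7 = q ^ 13 + q ^ 6)
    (hsolid : ∀ W : Submodule F (Fin 7 → F), finrank F W = 4 → ¬ ↑W ⊆ zeroSet f)
    {S : Submodule F (Fin 7 → F)} (hS : finrank F S = 4) (hcardS : (↑S ∩ zeroSet f).ncard = q ^ 6) :
    ∃ π, IsPlaneSection q f π S := by
  obtain ⟨π, hπ, hπS⟩ := (isLineBlocking_of_ncard_zeroSet hF hq hf hcard).exists_submodule_eq_inter
    hf hS (by rw [hcardS, hF, ← pow_mul])
  exact ⟨π, hq, hF, hf, hcard, hsolid, hπ, hS, hπS⟩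

end MainTheorem

/-- Under the hypotheses of the main theorem, every hyperplane of `PG(6,q²)` meets `S` in
exactly `q⁹ + q⁷ + q⁴ + q² + 1` or exactly `q⁹ + q⁷ + q⁵ + q⁴ + q² + 1` rational points;
in particular no hyperplane meets `S` in exactly `q⁹ + q⁷ + q⁵ + q² + 1` rational
points. -/
theorem stmt_14 (q : ℕ) (hq : ∃ p k : ℕ, p.Prime ∧ 0 < k ∧ q = p ^ k) (hq2 : 2 < q)
    (F : Type) [Field F] [Fintype F] (hcardF : Fintype.card F = q ^ 2)
    (f : MvPolynomial (Fin 7) F) (hf0 : f ≠ 0) (hfdeg : f.IsHomogeneous (q + 1))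
    (S : Set (Projectivization F (Fin 7 → F))) (hS : S = hypersurfacePts f)
    (hnosolid : ¬ ∃ W : Submodule F (Fin 7 → F), Module.finrank F W = 4 ∧ projPts W ⊆ S)
    (hcardS : S.ncard = q ^ 11 + q ^ 9 + q ^ 7 + q ^ 4 + q ^ 2 + 1)
    (hsolid : ∃ W : Submodule F (Fin 7 → F), Module.finrank F W = 4 ∧
      (S ∩ projPts W).ncard = q ^ 4 + q ^ 2 + 1) :
    (∀ H : Submodule F (Fin 7 → F), Module.finrank F H = 6 →
      (S ∩ projPts H).ncard = q ^ 9 + q ^ 7 + q ^ 4 + q ^ 2 + 1 ∨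
      (S ∩ projPts H).ncard = q ^ 9 + q ^ 7 + q ^ 5 + q ^ 4 + q ^ 2 + 1) ∧
    (∀ H : Submodule F (Fin 7 → F), Module.finrank F H = 6 →
      (S ∩ projPts H).ncard ≠ q ^ 9 + q ^ 7 + q ^ 5 + q ^ 2 + 1) := by
  subst hS
  have hF : Nat.card F = q ^ 2 := Nat.card_eq_fintype_card.trans hcardF
  have hcard {W : Submodule F (Fin 7 → F)} {N : ℕ} : (hypersurfacePts f ∩ projPts W).ncard = N ↔
      (↑W ∩ zeroSet f).ncard + N = N * q ^ 2 + 1 :=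
    hF ▸ ncard_hypersurfacePts_inter_eq_iff hfdeg
  have hZ : (zeroSet f).ncard + q ^ 7 = q ^ 13 + q ^ 6 := by
    rw [← Set.inter_univ (hypersurfacePts f), ← projPts_top, hcard, Submodule.top_coe,
      Set.univ_inter] at hcardS
    linear_combination hcardS
  obtain ⟨S, hS4, hS⟩ := hsolid
  obtain ⟨π, hπ⟩ := exists_isPlaneSection hF hq2 hfdeg hZ
    (fun W hW hWZ => hnosolid ⟨W, hW, projPts_subset_hypersurfacePts hWZ⟩) hS4
    (by linear_combination hcard.mp hS)
  have hblocking := isLineBlocking_of_ncard_zeroSet hF hq2 hfdeg hZ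
  refine (and_iff_left_of_imp fun hmain H hH hN => ?_).mpr fun H hH => ?_
  · have h5 : q ^ 4 < q ^ 5 := Nat.pow_lt_pow_right (by omega) (by omega)
    have h4 : 0 < q ^ 4 := by positivity
    rcases hmain H hH with h | h <;> omega
  · rw [hcard, hcard]
    refine (hπ.ncard_hyperplane hblocking hH).imp (fun h => ?_) fun h => ?_ <;>
      linear_combination h
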